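/- For every natural number n there exist a real number c > 0 and a function f : [0,∞) → ℝ which is C² on [0,∞), satisfies f(0) = 0 and f'(0) = c, solves f''(x) + f(x)³/ (sinh x)² = 0 for all x > 0, has exactly n zeros in (0,∞), and is such that lim_{x→∞} f'(x) = 0 and lim_{x→∞} f(x) exists, is finite and is nonzero. -/

import Mathlib

/-!
The proof is a shooting argument in the slope `c = f' 0`.

*Solutions.* With `v = f / x`, the mean value of `p = f'` over `[0, x]`, the equation becomes the
Volterra equation `p x = c - ∫₀ˣ wt s * v s ^ 3`, whose weight `wt s = s³ / sinh² s` is continuous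
and integrable on the whole half-line. After truncating the cubic to a globally Lipschitz function,
`volterra` is a contraction in a weighted sup norm, so that there is a solution for every `c`,
Lipschitz in `c` uniformly up to infinity (`exists_truncated_family`). A decreasing energy gives
`|f'| ≤ c` (`truncated_bound`), hence `|v| ≤ c`, and the truncation is not felt for `c ≤ R`.
Integrability of the weight also makes every solution asymptotic to a line `A x + L`
(`IsProfile.asymptotics`).

*Zeros.* The quantity `growth = (sinh x f')² / 2 + f⁴ / 4` increases. Its positivity shows that zeros
are simple, and that `L ≠ 0` when `A = 0` (`IsProfile.lim_ne_zero`). It is at least `1/8` beyond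
`x = 1/c`, which forces a zero in every window `(a, K a]` with `1/c ≤ a` and `K a ≤ 1`, for an
absolute constant `K`; so the number of zeros is unbounded as `c` grows (`IsProfile.many_zeros`),
while there are none for small `c` (`IsProfile.no_zeros`).

*Shooting.* Let `c₀` be the supremum of the slopes in `(0, R]` with at most `n` zeros, where slope `R`
has more than `n`. Simple zeros persist, so `c₀` itself has at most `n` zeros (`IsFamily.le_count`).
Slopes just above `c₀` have at least `n + 1` zeros; on compact sets no zero can be gained, and at
most one can enter from infinity (`IsFamily.count_le`, `IsFamily.tail_le_one`), so `c₀` has exactly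
`n`. If `A ≠ 0` at `c₀`, then none could enter from infinity (`IsFamily.tail_eq_zero`), which is
absurd; hence `f' → 0`.
-/

open Real Set Filter Topology

/-! ### The weight, the truncated cubic and averages -/

/-- The weight `s³ / sinh² s`, extended by `0` to `s ≤ 0`. -/
noncomputable def wt (s : ℝ) : ℝ := (max s 0) ^ 3 / sinh s ^ 2

/-- The mean value of `p` over the segment from `0` to `x`, so that `x * avg p x = ∫₀ˣ p`. -/
noncomputable def avg (p : ℝ → ℝ) (x : ℝ) : ℝ := ∫ t in (0 : ℝ)..1, p (t * x)

/-- The cubic nonlinearity, continued linearly beyond `|v| = R`. -/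
noncomputable def cubicTrunc (R v : ℝ) : ℝ := v * min (v ^ 2) (R ^ 2)

lemma wt_nonneg (s : ℝ) : 0 ≤ wt s := by unfold wt; positivity

lemma wt_of_nonpos {s : ℝ} (h : s ≤ 0) : wt s = 0 := by simp [wt, max_eq_right h]

lemma wt_of_pos {s : ℝ} (h : 0 < s) : wt s = s ^ 3 / sinh s ^ 2 := by
  simp [wt, max_eq_left h.le]

lemma wt_le_self {s : ℝ} (h : 0 ≤ s) : wt s ≤ s := by
  rcases h.eq_or_lt with rfl | h
  · simp [wt]
  rw [wt_of_pos h]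
  have h1 : s ≤ sinh s := self_le_sinh_iff.2 h.le
  have h2 : s ^ 2 ≤ sinh s ^ 2 := by gcongr
  rw [div_le_iff₀ (by positivity)]
  nlinarith

lemma continuous_wt : Continuous wt := by
  rw [continuous_iff_continuousAt]
  intro x
  by_cases hx : x = 0
  · subst hx
    have h0 : wt 0 = 0 := wt_of_nonpos le_rfl
    unfold ContinuousAt
    rw [h0]
    refine squeeze_zero (g := fun s => |s|) wt_nonneg (fun s => ?_) ?_
    · rcases le_total s 0 with h | h
      · rw [wt_of_nonpos h]; positivity
      · exact (wt_le_self h).trans (le_abs_self s)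
    · simpa using (continuous_abs (G := ℝ)).tendsto 0
  · unfold wt
    refine ContinuousAt.div (by fun_prop) (by fun_prop) ?_
    simpa using hx

/-- Exponential decay of the weight; the rate `3/2 > 1` is what makes `sinh * p` vanish at infinity
for solutions with `p → 0`. -/
lemma wt_le_exp {s : ℝ} (h : 0 ≤ s) : wt s ≤ 768 * exp (-(3 / 2) * s) := by
  rcases h.eq_or_lt with rfl | h
  · simp [wt]
  rw [wt_of_pos h]
  have h1 : exp s * s ≤ (1 + 2 * s) * sinh s := by
    have e1 : 1 + 2 * s ≤ exp (2 * s) := by linarith [add_one_le_exp (2 * s)]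
    have e2 : exp (2 * s) * exp (-s) = exp s := by rw [← exp_add]; ring_nf
    have e3 : exp s * exp (-s) = 1 := by rw [← exp_add]; simp
    have e4 : exp (2 * s) = exp s * exp s := by rw [← exp_add]; ring_nf
    rw [sinh_eq]
    nlinarith [mul_le_mul_of_nonneg_right e1 (exp_pos (-s)).le, exp_pos s, exp_pos (-s)]
  have h2 : (1 + 2 * s) ^ 3 ≤ 768 * exp (s / 2) := by
    have e1 := pow_div_factorial_le_exp (x := (1 + 2 * s) / 4) (by positivity) 3
    have e2 : exp ((1 + 2 * s) / 4) = exp (1 / 4) * exp (s / 2) := by rw [← exp_add]; ring_nf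
    have e3 : exp (1 / 4 : ℝ) ≤ 2 := by
      have : exp (1 / 4 : ℝ) ^ 4 = exp 1 := by rw [← exp_nat_mul]; norm_num
      by_contra! hc
      have h16 : (2 : ℝ) ^ 4 ≤ exp (1 / 4 : ℝ) ^ 4 := by gcongr
      linarith [exp_one_lt_d9]
    rw [e2] at e1
    norm_num [Nat.factorial] at e1
    nlinarith [exp_pos (s / 2)]
  have hs : 0 < sinh s := sinh_pos_iff.2 h
  rw [div_le_iff₀ (by positivity)]
  have e5 : exp (-(3 / 2) * s) * (exp s) ^ 2 = exp (s / 2) := by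
    rw [← exp_nat_mul, ← exp_add]; ring_nf
  have h3 : (exp s * s) ^ 2 ≤ ((1 + 2 * s) * sinh s) ^ 2 := by gcongr
  have h4 : s ^ 3 * exp s ^ 2 ≤ (1 + 2 * s) ^ 3 * sinh s ^ 2 := by
    calc s ^ 3 * exp s ^ 2 = s * (exp s * s) ^ 2 := by ring
      _ ≤ (1 + 2 * s) * ((1 + 2 * s) * sinh s) ^ 2 := by gcongr; linarith
      _ = _ := by ring
  have h5 : s ^ 3 * exp s ^ 2 ≤ 768 * exp (s / 2) * sinh s ^ 2 := h4.trans (by gcongr)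
  rw [← e5] at h5
  have : 0 < exp s ^ 2 := by positivity
  refine le_of_mul_le_mul_right ?_ this
  linarith

/-- The primitive of the weight that vanishes at `0`. -/
noncomputable def wtInt (x : ℝ) : ℝ := ∫ s in (0 : ℝ)..x, wt s

lemma hasDerivAt_wtInt (x : ℝ) : HasDerivAt wtInt (wt x) x :=
  (continuous_wt.integral_hasStrictDerivAt 0 x).hasDerivAt

lemma continuous_wtInt : Continuous wtInt :=
  continuous_iff_continuousAt.2 fun x => (hasDerivAt_wtInt x).continuousAt

lemma wtInt_mono : Monotone wtInt :=
  monotone_of_hasDerivAt_nonneg hasDerivAt_wtInt wt_nonneg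

lemma wtInt_zero : wtInt 0 = 0 := by simp [wtInt]

lemma wtInt_of_nonpos {x : ℝ} (h : x ≤ 0) : wtInt x = 0 := by
  unfold wtInt
  rw [intervalIntegral.integral_congr (g := fun _ => 0)]
  · simp
  · intro s hs
    rw [uIcc_of_ge h] at hs
    exact wt_of_nonpos hs.2

lemma wtInt_nonneg (x : ℝ) : 0 ≤ wtInt x := by
  rcases le_total x 0 with h | h
  · rw [wtInt_of_nonpos h]
  · rw [← wtInt_zero]; exact wtInt_mono h

lemma wtInt_tail {x y : ℝ} (hx : 0 ≤ x) (hxy : x ≤ y) :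
    wtInt y - wtInt x ≤ 512 * exp (-(3 / 2) * x) := by
  have key : AntitoneOn (fun z => wtInt z + 512 * exp (-(3 / 2) * z)) (Ici 0) := by
    have hd : ∀ z, HasDerivAt (fun z => wtInt z + 512 * exp (-(3 / 2) * z))
        (wt z + 512 * (exp (-(3 / 2) * z) * (-(3 / 2) * 1))) z := fun z =>
      (hasDerivAt_wtInt z).add (((hasDerivAt_id z).const_mul _).exp.const_mul _)
    refine antitoneOn_of_hasDerivWithinAt_nonpos (convex_Ici 0)
      (fun z _ => (hd z).continuousAt.continuousWithinAt)
      (fun z _ => (hd z).hasDerivWithinAt) ?_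
    intro z hz
    rw [interior_Ici] at hz
    have := wt_le_exp (s := z) (le_of_lt hz)
    linarith
  have := key hx (hx.trans hxy : 0 ≤ y) hxy
  simp only at this
  have := exp_pos (-(3 / 2) * y)
  linarith

lemma wtInt_le (x : ℝ) : wtInt x ≤ 512 := by
  rcases le_total x 0 with h | h
  · rw [wtInt_of_nonpos h]; norm_num
  · simpa [wtInt_zero] using wtInt_tail le_rfl h

lemma continuous_cubicTrunc (R : ℝ) : Continuous (cubicTrunc R) := by
  unfold cubicTrunc; fun_prop

lemma cubicTrunc_zero (R : ℝ) : cubicTrunc R 0 = 0 := by simp [cubicTrunc]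

lemma cubicTrunc_of_le {R v : ℝ} (h : |v| ≤ R) : cubicTrunc R v = v ^ 3 := by
  have : v ^ 2 ≤ R ^ 2 := sq_le_sq' (by linarith [abs_le.1 h]) (abs_le.1 h).2
  rw [cubicTrunc, min_eq_left this]; ring

lemma cubicTrunc_lipschitz {R : ℝ} (hR : 0 ≤ R) (a b : ℝ) :
    |cubicTrunc R a - cubicTrunc R b| ≤ 3 * R ^ 2 * |a - b| := by
  wlog hab : |a| ≤ |b| generalizing a b
  · rw [abs_sub_comm, abs_sub_comm a b]; exact this b a (le_of_not_ge hab)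
  have h0 : a ^ 2 ≤ b ^ 2 := sq_le_sq.2 hab
  have e : cubicTrunc R a - cubicTrunc R b =
      (a - b) * min (b ^ 2) (R ^ 2) + a * (min (a ^ 2) (R ^ 2) - min (b ^ 2) (R ^ 2)) := by
    unfold cubicTrunc; ring
  have hb : |b| - |a| ≤ |a - b| := by rw [abs_sub_comm]; exact abs_sub_abs_le_abs_sub b a
  have h1 : |a * (min (a ^ 2) (R ^ 2) - min (b ^ 2) (R ^ 2))| ≤ 2 * R ^ 2 * |a - b| := by
    rw [abs_mul, abs_sub_comm (min _ _),
      abs_of_nonneg (sub_nonneg.2 (min_le_min_right _ h0))]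
    have sa := sq_abs a
    have sb := sq_abs b
    have na := abs_nonneg a
    rcases le_total (R ^ 2) (a ^ 2) with h | h
    · rw [min_eq_right h, min_eq_right (h.trans h0)]; simp; positivity
    · have haR : |a| ≤ R := abs_le_of_sq_le_sq h hR
      rw [min_eq_left h]
      have h2 : min (b ^ 2) (R ^ 2) - a ^ 2 ≤ 2 * R * |a - b| := by
        rcases le_total |b| R with h' | h'
        · calc _ ≤ b ^ 2 - a ^ 2 := by gcongr; exact min_le_left _ _
            _ = (|b| - |a|) * (|b| + |a|) := by rw [← sa, ← sb]; ring
            _ ≤ |a - b| * (2 * R) := by gcongr; linarith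
            _ = _ := by ring
        · calc _ ≤ R ^ 2 - a ^ 2 := by gcongr; exact min_le_right _ _
            _ = (R - |a|) * (R + |a|) := by rw [← sa]; ring
            _ ≤ |a - b| * (2 * R) := by
              apply mul_le_mul <;> linarith [abs_nonneg (a - b)]
            _ = _ := by ring
      calc _ ≤ R * (2 * R * |a - b|) := by
            apply mul_le_mul haR h2 _ hR
            have : a ^ 2 ≤ min (b ^ 2) (R ^ 2) := le_min h0 h
            linarith
        _ = _ := by ring
  have h2 : |(a - b) * min (b ^ 2) (R ^ 2)| ≤ R ^ 2 * |a - b| := by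
    rw [abs_mul, abs_of_nonneg (le_min (sq_nonneg b) (sq_nonneg R)), mul_comm]
    gcongr; exact min_le_right _ _
  rw [e]
  refine (abs_add_le _ _).trans ?_
  linarith

lemma continuous_avg {p : ℝ → ℝ} (hp : Continuous p) : Continuous (avg p) := by
  unfold avg
  apply intervalIntegral.continuous_parametric_intervalIntegral_of_continuous' (by fun_prop)

lemma mul_avg (p : ℝ → ℝ) (x : ℝ) : x * avg p x = ∫ s in (0 : ℝ)..x, p s := by
  simp [avg]

lemma abs_avg_sub_le {p q : ℝ → ℝ} (hp : Continuous p) (hq : Continuous q) {x C : ℝ}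
    (h : ∀ t ∈ Icc (0 : ℝ) 1, |p (t * x) - q (t * x)| ≤ C) : |avg p x - avg q x| ≤ C := by
  unfold avg
  rw [← intervalIntegral.integral_sub
    (Continuous.intervalIntegrable (by fun_prop) _ _)
    (Continuous.intervalIntegrable (by fun_prop) _ _)]
  have := intervalIntegral.norm_integral_le_of_norm_le_const (a := (0 : ℝ)) (b := 1) (C := C)
    (f := fun t => p (t * x) - q (t * x)) (fun t ht => by
      rw [uIoc_of_le zero_le_one] at ht
      exact h t ⟨ht.1.le, ht.2⟩)
  simpa using this

/-! ### Solving the truncated problem -/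

/-- The integral operator whose fixed points are the derivatives `p = f'` of solutions of the
truncated equation with `f 0 = 0`, `f' 0 = c`; here `f x = x * avg p x`. -/
noncomputable def volterra (R c : ℝ) (p : ℝ → ℝ) (x : ℝ) : ℝ :=
  c - ∫ s in (0 : ℝ)..x, wt s * cubicTrunc R (avg p s)

lemma continuous_integrand (R : ℝ) {p : ℝ → ℝ} (hp : Continuous p) :
    Continuous fun s => wt s * cubicTrunc R (avg p s) :=
  continuous_wt.mul ((continuous_cubicTrunc R).comp (continuous_avg hp))

lemma hasDerivAt_volterra (R c : ℝ) {p : ℝ → ℝ} (hp : Continuous p) (x : ℝ) :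
    HasDerivAt (volterra R c p) (-(wt x * cubicTrunc R (avg p x))) x := by
  have := ((continuous_integrand R hp).integral_hasStrictDerivAt 0 x).hasDerivAt
  exact this.const_sub c

lemma continuous_volterra (R c : ℝ) {p : ℝ → ℝ} (hp : Continuous p) :
    Continuous (volterra R c p) :=
  continuous_iff_continuousAt.2 fun x => (hasDerivAt_volterra R c hp x).continuousAt

/-- The exponent of the weight in the norm that turns `volterra` into a contraction. -/
noncomputable def rate (R : ℝ) : ℝ := 6 * R ^ 2 + 1

lemma rate_pos (R : ℝ) : 0 < rate R := by unfold rate; positivity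

/-- In the norm `sup |p| * exp (-rate R * wtInt)` the operator halves distances. -/
lemma volterra_contract {R : ℝ} (hR : 0 ≤ R) (c : ℝ) {p q : ℝ → ℝ} (hp : Continuous p)
    (hq : Continuous q) {d : ℝ} (h : ∀ x, |p x - q x| ≤ d * exp (rate R * wtInt x)) (x : ℝ) :
    |volterra R c p x - volterra R c q x| ≤ d / 2 * exp (rate R * wtInt x) := by
  have hd : 0 ≤ d := by
    have := (abs_nonneg _).trans (h 0)
    exact nonneg_of_mul_nonneg_left this (exp_pos _)
  have e : volterra R c p x - volterra R c q x =
      -∫ s in (0 : ℝ)..x, (wt s * cubicTrunc R (avg p s) - wt s * cubicTrunc R (avg q s)) := by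
    rw [intervalIntegral.integral_sub ((continuous_integrand R hp).intervalIntegrable _ _)
      ((continuous_integrand R hq).intervalIntegrable _ _)]
    unfold volterra; ring
  rw [e, abs_neg]
  rcases le_total x 0 with hx | hx
  · rw [intervalIntegral.integral_congr (g := fun _ => 0)]
    · simp; positivity
    · intro s hs
      rw [uIcc_of_ge hx] at hs
      simp [wt_of_nonpos hs.2]
  have hder : ∀ s, HasDerivAt (fun s => d / 2 * exp (rate R * wtInt s))
      (d / 2 * (exp (rate R * wtInt s) * (rate R * wt s))) s := fun s =>
    (((hasDerivAt_wtInt s).const_mul _).exp.const_mul _)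
  have hcont : Continuous fun s => d / 2 * (exp (rate R * wtInt s) * (rate R * wt s)) := by
    have := continuous_wt
    have := continuous_wtInt
    fun_prop
  have hb := intervalIntegral.norm_integral_le_of_norm_le (μ := MeasureTheory.volume) hx
    (f := fun s => wt s * cubicTrunc R (avg p s) - wt s * cubicTrunc R (avg q s))
    (g := fun s => d / 2 * (exp (rate R * wtInt s) * (rate R * wt s)))
    (Eventually.of_forall fun s hs => ?_) (hcont.intervalIntegrable _ _)
  · rw [intervalIntegral.integral_eq_sub_of_hasDerivAt (fun s _ => hder s)
      (hcont.intervalIntegrable _ _)] at hb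
    have : 0 < exp (rate R * wtInt 0) := exp_pos _
    rw [norm_eq_abs] at hb
    nlinarith
  · rw [← mul_sub, norm_mul, norm_of_nonneg (wt_nonneg s), norm_eq_abs]
    have h1 : |avg p s - avg q s| ≤ d * exp (rate R * wtInt s) := by
      refine abs_avg_sub_le hp hq fun t ht => (h _).trans ?_
      have : wtInt (t * s) ≤ wtInt s := wtInt_mono (by nlinarith [ht.2, hs.1])
      have := (rate_pos R).le
      gcongr
    have h2 := (cubicTrunc_lipschitz hR (avg p s) (avg q s)).trans
      (mul_le_mul_of_nonneg_left h1 (by positivity))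
    have h3 : 3 * R ^ 2 ≤ rate R / 2 := by unfold rate; linarith
    calc _ ≤ wt s * (rate R / 2 * (d * exp (rate R * wtInt s))) := by
          refine mul_le_mul_of_nonneg_left (h2.trans ?_) (wt_nonneg s)
          gcongr
      _ = _ := by ring

/-- Undoing the exponential weight. -/
noncomputable def unweight (R : ℝ) (u : BoundedContinuousFunction ℝ ℝ) (x : ℝ) : ℝ :=
  exp (rate R * wtInt x) * u x

lemma continuous_unweight (R : ℝ) (u : BoundedContinuousFunction ℝ ℝ) :
    Continuous (unweight R u) := by
  have := continuous_wtInt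
  have := u.continuous
  unfold unweight
  fun_prop

lemma unweight_sub_le (R : ℝ) (u v : BoundedContinuousFunction ℝ ℝ) (x : ℝ) :
    |unweight R u x - unweight R v x| ≤ dist u v * exp (rate R * wtInt x) := by
  unfold unweight
  rw [← mul_sub, abs_mul, abs_of_pos (exp_pos _), mul_comm]
  refine mul_le_mul_of_nonneg_right ?_ (exp_pos _).le
  rw [← dist_eq]
  exact BoundedContinuousFunction.dist_coe_le_dist x

lemma volterra_zero (R c : ℝ) : volterra R c (fun _ => 0) = fun _ => c := by
  funext x; simp [volterra, avg, cubicTrunc_zero]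

/-- The operator `volterra` conjugated to the space of bounded continuous functions with its
unweighted norm. -/
noncomputable def weightedOp (R : ℝ) (hR : 0 ≤ R) (c : ℝ) (u : BoundedContinuousFunction ℝ ℝ) :
    BoundedContinuousFunction ℝ ℝ :=
  BoundedContinuousFunction.ofNormedAddCommGroup
    (fun x => exp (-(rate R * wtInt x)) * volterra R c (unweight R u) x)
    (by
      have := continuous_wtInt
      have := continuous_volterra R c (continuous_unweight R u)
      fun_prop)
    (|c| + dist u (0 : BoundedContinuousFunction ℝ ℝ) / 2)
    (by
      intro x
      have h0 : unweight R 0 = fun _ => 0 := by funext x; simp [unweight]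
      have h := volterra_contract hR c (continuous_unweight R u) (continuous_unweight R 0)
        (unweight_sub_le R u 0) x
      rw [h0, volterra_zero] at h
      have h1 : 1 ≤ exp (rate R * wtInt x) :=
        one_le_exp (mul_nonneg (rate_pos R).le (wtInt_nonneg x))
      rw [norm_mul, norm_of_nonneg (exp_pos _).le, exp_neg, norm_eq_abs,
        inv_mul_le_iff₀ (exp_pos _)]
      have h2 : |volterra R c (unweight R u) x| ≤
          |volterra R c (unweight R u) x - c| + |c| := by
        simpa using abs_add_le (volterra R c (unweight R u) x - c) c
      nlinarith [abs_nonneg c])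

lemma weightedOp_apply (R : ℝ) (hR : 0 ≤ R) (c : ℝ) (u : BoundedContinuousFunction ℝ ℝ) (x : ℝ) :
    weightedOp R hR c u x = exp (-(rate R * wtInt x)) * volterra R c (unweight R u) x := rfl

lemma weightedOp_contracting (R : ℝ) (hR : 0 ≤ R) (c : ℝ) :
    ContractingWith (1 / 2) (weightedOp R hR c) := by
  refine ⟨by rw [← NNReal.coe_lt_coe]; norm_num, LipschitzWith.of_dist_le_mul fun u v => ?_⟩
  rw [BoundedContinuousFunction.dist_le (by positivity)]
  intro x
  have h := volterra_contract hR c (continuous_unweight R u) (continuous_unweight R v)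
    (unweight_sub_le R u v) x
  rw [weightedOp_apply, weightedOp_apply, dist_eq, ← mul_sub, abs_mul, abs_of_pos (exp_pos _),
    exp_neg, inv_mul_le_iff₀ (exp_pos _)]
  refine h.trans (le_of_eq ?_)
  push_cast
  ring

/-- The truncated problem is uniquely solvable by contraction for every initial slope, and the
solution is Lipschitz in the slope, uniformly on the whole half-line. -/
theorem exists_truncated_family {R : ℝ} (hR : 0 ≤ R) :
    ∃ (P : ℝ → ℝ → ℝ) (C : ℝ), (∀ c, Continuous (P c)) ∧ (∀ c, volterra R c (P c) = P c) ∧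
      ∀ c c' x, |P c x - P c' x| ≤ C * |c - c'| := by
  let U : ℝ → BoundedContinuousFunction ℝ ℝ := fun c =>
    ContractingWith.fixedPoint (weightedOp R hR c) (weightedOp_contracting R hR c)
  have hU : ∀ c, weightedOp R hR c (U c) = U c := fun c =>
    (weightedOp_contracting R hR c).fixedPoint_isFixedPt
  refine ⟨fun c => unweight R (U c), 2 * exp (rate R * 512), fun c => continuous_unweight R _,
    fun c => ?_, fun c c' x => ?_⟩
  · funext x
    change _ = exp (rate R * wtInt x) * U c x
    rw [← hU c, weightedOp_apply, ← mul_assoc, ← exp_add]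
    simp
  · have hd : dist (U c) (U c') ≤ |c - c'| / (1 - ((1 / 2 : NNReal) : ℝ)) := by
      refine (weightedOp_contracting R hR c).fixedPoint_lipschitz_in_map
        (weightedOp_contracting R hR c') fun z => ?_
      rw [BoundedContinuousFunction.dist_le (by positivity)]
      intro x
      have e : volterra R c (unweight R z) x - volterra R c' (unweight R z) x = c - c' := by
        unfold volterra; ring
      rw [weightedOp_apply, weightedOp_apply, dist_eq, ← mul_sub, e, abs_mul,
        abs_of_pos (exp_pos _)]
      refine mul_le_of_le_one_left (abs_nonneg _) (exp_le_one_iff.2 ?_)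
      have := mul_nonneg (rate_pos R).le (wtInt_nonneg x)
      linarith
    have hd' : dist (U c) (U c') ≤ 2 * |c - c'| := by
      refine hd.trans (le_of_eq ?_)
      push_cast
      ring
    have h1 := unweight_sub_le R (U c) (U c') x
    have h2 : exp (rate R * wtInt x) ≤ exp (rate R * 512) := by
      have := wtInt_le x
      have := (rate_pos R).le
      gcongr
    calc _ ≤ _ := h1
      _ ≤ 2 * |c - c'| * exp (rate R * 512) := by gcongr
      _ = _ := by ring

/-! ### The a priori bound and the family of solutions -/

/-- `f` solves the equation on `(0, ∞)` with `f 0 = 0`, `f' 0 = c`, has derivative `p`, and obeys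
the a priori bound `|f'| ≤ c`. On the negative axis nothing but regularity is asked. -/
structure IsProfile (c : ℝ) (f p : ℝ → ℝ) : Prop where
  contDiff : ContDiff ℝ 2 f
  cont_p : Continuous p
  f_zero : f 0 = 0
  p_zero : p 0 = c
  hasDeriv_f : ∀ x, HasDerivAt f (p x) x
  hasDeriv_p : ∀ x, 0 < x → HasDerivAt p (-(f x ^ 3 / sinh x ^ 2)) x
  p_bound : ∀ x, 0 ≤ x → |p x| ≤ c

lemma sinh_le_mul_cosh {x : ℝ} (hx : 0 ≤ x) : sinh x ≤ x * cosh x := by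
  have hd : ∀ z, HasDerivAt (fun z => z * cosh z - sinh z) (1 * cosh z + z * sinh z - cosh z) z :=
    fun z => ((hasDerivAt_id z).mul (hasDerivAt_cosh z)).sub (hasDerivAt_sinh z)
  have key : MonotoneOn (fun z => z * cosh z - sinh z) (Ici 0) := by
    refine monotoneOn_of_hasDerivWithinAt_nonneg (convex_Ici 0)
      (fun z _ => (hd z).continuousAt.continuousWithinAt)
      (fun z _ => (hd z).hasDerivWithinAt) ?_
    intro z hz
    rw [interior_Ici] at hz
    have := mul_nonneg (le_of_lt hz) (sinh_nonneg_iff.2 (le_of_lt hz))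
    linarith
  have := key (self_mem_Ici) hx hx
  simp at this
  linarith

/-- Twice the potential of `cubicTrunc R`, as a function of `s = v²`. -/
noncomputable def potential (R s : ℝ) : ℝ := ∫ t in (0 : ℝ)..s, min t (R ^ 2)

lemma hasDerivAt_potential (R s : ℝ) : HasDerivAt (potential R) (min s (R ^ 2)) s :=
  ((continuous_id.min continuous_const).integral_hasStrictDerivAt 0 s).hasDerivAt

lemma potential_nonneg (R : ℝ) {s : ℝ} (hs : 0 ≤ s) : 0 ≤ potential R s :=
  intervalIntegral.integral_nonneg hs fun _ ht => le_min ht.1 (sq_nonneg R)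

lemma potential_le (R : ℝ) {s : ℝ} (hs : 0 ≤ s) : potential R s ≤ s * min s (R ^ 2) := by
  have := intervalIntegral.integral_mono_on (f := fun t => min t (R ^ 2))
    (g := fun _ => min s (R ^ 2)) (μ := MeasureTheory.volume) hs
    (Continuous.intervalIntegrable (by fun_prop) _ _)
    (Continuous.intervalIntegrable (by fun_prop) _ _)
    (fun t ht => min_le_min_right _ ht.2)
  simpa [potential] using this

/-- The energy `p²/2 + (x⁴ / sinh² x) H(v²) / 2`, where `v = f / x` and `H` is `potential R`,
decreases along solutions of the truncated problem, and it tends to `c² / 2` as `x → 0`. -/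
lemma truncated_bound {R c : ℝ} (hc : 0 ≤ c) {f p : ℝ → ℝ} (hpc : Continuous p)
    (hp0 : p 0 = c) (hf : ∀ x, HasDerivAt f (p x) x)
    (v : ℝ → ℝ) (hv : Continuous v) (hfv : ∀ x, f x = x * v x)
    (hp : ∀ x, HasDerivAt p (-(wt x * cubicTrunc R (v x))) x) :
    ∀ x, 0 ≤ x → |p x| ≤ c := by
  intro x hx
  rcases hx.eq_or_lt with rfl | hx
  · rw [hp0, abs_of_nonneg hc]
  set E : ℝ → ℝ := fun x => p x ^ 2 / 2 + x ^ 4 / sinh x ^ 2 * (potential R (v x ^ 2) / 2) with hE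
  have hdv : ∀ z, 0 < z → HasDerivAt v ((p z * z - f z * 1) / z ^ 2) z := by
    intro z hz
    refine ((hf z).div (hasDerivAt_id z) hz.ne').congr_of_eventuallyEq ?_
    filter_upwards [eventually_gt_nhds hz] with y hy
    have hy' : (0 : ℝ) < y := hy
    simp only [Pi.div_apply, id]
    rw [hfv y]; field_simp
  have hanti : AntitoneOn E (Ioi 0) := by
    have hd : ∀ z ∈ Ioi (0 : ℝ), HasDerivAt E
        ((2 * p z ^ (2 - 1) * (-(wt z * cubicTrunc R (v z)))) / 2 +
        (((4 : ℕ) * z ^ (4 - 1) * sinh z ^ 2 - z ^ 4 * ((2 : ℕ) * sinh z ^ (2 - 1) * cosh z))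
            / (sinh z ^ 2) ^ 2 * (potential R (v z ^ 2) / 2) +
          z ^ 4 / sinh z ^ 2 * (min (v z ^ 2) (R ^ 2) *
            ((2 : ℕ) * v z ^ (2 - 1) * ((p z * z - f z * 1) / z ^ 2)) / 2))) z := by
      intro z hz
      have hs : sinh z ^ 2 ≠ 0 := pow_ne_zero 2 (sinh_pos_iff.2 hz).ne'
      have h1 := (((hp z).pow 2).div_const 2)
      have h2 := ((hasDerivAt_pow 4 z).div ((hasDerivAt_sinh z).pow 2) hs)
      have h3 := ((HasDerivAt.comp z (hasDerivAt_potential R (v z ^ 2))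
        ((hdv z hz).pow 2)).div_const 2)
      exact h1.add (h2.mul h3)
    refine antitoneOn_of_hasDerivWithinAt_nonpos (convex_Ioi 0)
      (fun z hz => (hd z hz).continuousAt.continuousWithinAt)
      (fun z hz => (hd z (interior_subset hz)).hasDerivWithinAt) ?_
    intro z hz
    have hz : 0 < z := interior_subset hz
    have hs : 0 < sinh z := sinh_pos_iff.2 hz
    have hH0 := potential_nonneg R (sq_nonneg (v z))
    have hH1 := potential_le R (sq_nonneg (v z))
    have hcs := sinh_le_mul_cosh hz.le
    rw [wt_of_pos hz, hfv z, cubicTrunc]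
    set H := potential R (v z ^ 2)
    set m := min (v z ^ 2) (R ^ 2)
    have e : 2 * p z ^ (2 - 1) * (-(z ^ 3 / sinh z ^ 2 * (v z * m))) / 2 +
        (((4 : ℕ) * z ^ (4 - 1) * sinh z ^ 2 - z ^ 4 * ((2 : ℕ) * sinh z ^ (2 - 1) * cosh z))
            / (sinh z ^ 2) ^ 2 * (H / 2) +
          z ^ 4 / sinh z ^ 2 * (m *
            ((2 : ℕ) * v z ^ (2 - 1) * ((p z * z - z * v z * 1) / z ^ 2)) / 2)) =
        -(z ^ 3 / sinh z ^ 3 * ((z * cosh z - sinh z) * H + sinh z * (v z ^ 2 * m - H))) := by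
      push_cast
      field_simp
      ring
    rw [e, neg_nonpos]
    have a1 : 0 ≤ z * cosh z - sinh z := by linarith
    have a2 : 0 ≤ v z ^ 2 * m - H := by linarith
    positivity
  have hlim : Tendsto E (𝓝[>] 0) (𝓝 (c ^ 2 / 2)) := by
    have hcE : Tendsto (fun z => p z ^ 2 / 2) (𝓝[>] 0) (𝓝 (c ^ 2 / 2)) := by
      have : Continuous fun z => p z ^ 2 / 2 := by fun_prop
      have := this.tendsto 0
      rw [hp0] at this
      exact this.mono_left nhdsWithin_le_nhds
    have hP : Continuous fun z => z ^ 2 * (potential R (v z ^ 2) / 2) := by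
      have : Continuous (potential R) :=
        continuous_iff_continuousAt.2 fun s => (hasDerivAt_potential R s).continuousAt
      fun_prop
    have h2 : Tendsto (fun z => z ^ 4 / sinh z ^ 2 * (potential R (v z ^ 2) / 2)) (𝓝[>] 0)
        (𝓝 0) := by
      have hP0 := hP.tendsto 0
      rw [show (0 : ℝ) ^ 2 * (potential R (v 0 ^ 2) / 2) = 0 by ring] at hP0
      refine squeeze_zero' ?_ ?_ (hP0.mono_left nhdsWithin_le_nhds)
      · filter_upwards [self_mem_nhdsWithin] with z _
        have := potential_nonneg R (sq_nonneg (v z))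
        positivity
      · filter_upwards [self_mem_nhdsWithin] with z hz
        have hz : 0 < z := hz
        have hH := potential_nonneg R (sq_nonneg (v z))
        have hs : z ≤ sinh z := self_le_sinh_iff.2 hz.le
        have : z ^ 4 / sinh z ^ 2 ≤ z ^ 2 := by
          rw [div_le_iff₀ (pow_pos (hz.trans_le hs) 2)]
          have : z ^ 2 ≤ sinh z ^ 2 := by gcongr
          nlinarith [sq_nonneg z]
        gcongr
    simpa using hcE.add h2
  have hle : E x ≤ c ^ 2 / 2 := by
    refine ge_of_tendsto hlim ?_
    filter_upwards [Ioo_mem_nhdsGT hx] with z hz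
    exact hanti hz.1 hx hz.2.le
  have hH := potential_nonneg R (sq_nonneg (v x))
  have : p x ^ 2 / 2 ≤ E x := by
    simp only [hE]
    have : 0 ≤ x ^ 4 / sinh x ^ 2 * (potential R (v x ^ 2) / 2) := by positivity
    linarith
  exact abs_le_of_sq_le_sq (by linarith) hc

/-- Solutions exist for all slopes in `[0, R]`, and depend on the slope in a Lipschitz way,
uniformly up to infinity. -/
theorem exists_family {R : ℝ} (hR : 0 ≤ R) :
    ∃ (F P : ℝ → ℝ → ℝ) (C : ℝ), 0 < C ∧ (∀ c ∈ Icc 0 R, IsProfile c (F c) (P c)) ∧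
      (∀ c c' x, |P c x - P c' x| ≤ C * |c - c'|) ∧
      ∀ c c' x, 0 ≤ x → |F c x - F c' x| ≤ C * |c - c'| * x := by
  obtain ⟨P, C, hcont, hfix, hlip⟩ := exists_truncated_family hR
  have hlip' : ∀ c c' x, |P c x - P c' x| ≤ (|C| + 1) * |c - c'| := fun c c' x =>
    (hlip c c' x).trans (by gcongr; linarith [le_abs_self C])
  refine ⟨fun c x => x * avg (P c) x, P, |C| + 1, by positivity, fun c hc => ?_, hlip',
    fun c c' x hx => ?_⟩
  · have hp : ∀ x, HasDerivAt (P c) (-(wt x * cubicTrunc R (avg (P c) x))) x := by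
      intro x
      have := hasDerivAt_volterra R c (hcont c) x
      rwa [hfix c] at this
    have hf : ∀ x, HasDerivAt (fun x => x * avg (P c) x) (P c x) x := by
      intro x
      simp only [mul_avg]
      exact ((hcont c).integral_hasStrictDerivAt 0 x).hasDerivAt
    have hp0 : P c 0 = c := by rw [← hfix c]; simp [volterra]
    have hbd := truncated_bound hc.1 (hcont c) hp0 hf (avg (P c)) (continuous_avg (hcont c))
      (fun _ => rfl) hp
    refine ⟨?_, hcont c, by simp, hp0, hf, fun x hx => ?_, hbd⟩
    · have e1 : deriv (fun x => x * avg (P c) x) = P c := funext fun x => (hf x).deriv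
      have e2 : deriv (P c) = fun x => -(wt x * cubicTrunc R (avg (P c) x)) :=
        funext fun x => (hp x).deriv
      rw [show (2 : WithTop ℕ∞) = 1 + 1 by norm_num, contDiff_succ_iff_deriv, e1]
      refine ⟨fun x => (hf x).differentiableAt, by simp, ?_⟩
      rw [contDiff_one_iff_deriv, e2]
      exact ⟨fun x => (hp x).differentiableAt, (continuous_integrand R (hcont c)).neg⟩
    · -- the a priori bound keeps `f / x` within the range where the cubic is not truncated
      have hv : |avg (P c) x| ≤ R := by
        have := abs_avg_sub_le (hcont c) (q := fun _ => 0) continuous_const (x := x) (C := c)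
          (fun t ht => by simpa using hbd _ (mul_nonneg ht.1 hx.le))
        have e : avg (fun _ => (0 : ℝ)) x = 0 := by simp [avg]
        rw [e, sub_zero] at this
        exact this.trans hc.2
      have := hp x
      rw [cubicTrunc_of_le hv, wt_of_pos hx] at this
      convert this using 2
      ring
  · rw [← mul_sub, abs_mul, abs_of_nonneg hx, mul_comm]
    gcongr
    exact abs_avg_sub_le (hcont c) (hcont c') fun t _ => hlip' _ _ _

/-! ### Simple zeros and asymptotics -/

/-- The quantity `(sinh x f')² / 2 + f⁴ / 4`, which increases along solutions. -/
noncomputable def growth (f p : ℝ → ℝ) (x : ℝ) : ℝ := (sinh x * p x) ^ 2 / 2 + f x ^ 4 / 4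

namespace IsProfile

variable {c : ℝ} {f p : ℝ → ℝ}

lemma slope_nonneg (h : IsProfile c f p) : 0 ≤ c := (abs_nonneg _).trans (h.p_bound 0 le_rfl)

lemma continuous_f (h : IsProfile c f p) : Continuous f := h.contDiff.continuous

lemma f_sub_le (h : IsProfile c f p) {x y B : ℝ} (hxy : x ≤ y)
    (hB : ∀ z ∈ Icc x y, |p z| ≤ B) : |f y - f x| ≤ B * (y - x) := by
  have := (convex_Icc x y).norm_image_sub_le_of_norm_hasDerivWithin_le (C := B)
    (fun z _ => (h.hasDeriv_f z).hasDerivWithinAt) hB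
    (left_mem_Icc.2 hxy) (right_mem_Icc.2 hxy)
  rwa [norm_eq_abs, norm_eq_abs, abs_of_nonneg (sub_nonneg.2 hxy)] at this

lemma f_bound (h : IsProfile c f p) {x : ℝ} (hx : 0 ≤ x) : |f x| ≤ c * x := by
  have := h.f_sub_le hx (B := c) (fun z hz => h.p_bound z hz.1)
  simpa [h.f_zero] using this

lemma p_sub_le (h : IsProfile c f p) {x y B : ℝ} (hx : 0 ≤ x) (hxy : x ≤ y)
    (hB : ∀ z ∈ Icc x y, |f z| ^ 3 ≤ B * z ^ 3) :
    |p y - p x| ≤ B * (wtInt y - wtInt x) := by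
  have hd : ∀ z ∈ interior (Icc x y), |f z ^ 3 / sinh z ^ 2| ≤ B * wt z := by
    intro z hz
    rw [interior_Icc] at hz
    have hz0 : 0 < z := hx.trans_lt hz.1
    have hs := sinh_pos_iff.2 hz0
    rw [wt_of_pos hz0, abs_div, abs_pow, abs_of_pos (pow_pos hs 2), ← mul_div_assoc]
    have := hB z (Ioo_subset_Icc_self hz)
    gcongr
  have pos : ∀ z ∈ interior (Icc x y), 0 < z := fun z hz => by
    rw [interior_Icc] at hz; exact hx.trans_lt hz.1
  have hW := continuous_wtInt
  have hp := h.cont_p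
  have h1 : AntitoneOn (fun z => p z - B * wtInt z) (Icc x y) :=
    antitoneOn_of_hasDerivWithinAt_nonpos (convex_Icc x y) (by fun_prop)
      (fun z hz => ((h.hasDeriv_p z (pos z hz)).sub
        ((hasDerivAt_wtInt z).const_mul B)).hasDerivWithinAt)
      (fun z hz => by linarith [(abs_le.1 (hd z hz)).1])
  have h2 : MonotoneOn (fun z => p z + B * wtInt z) (Icc x y) :=
    monotoneOn_of_hasDerivWithinAt_nonneg (convex_Icc x y) (by fun_prop)
      (fun z hz => ((h.hasDeriv_p z (pos z hz)).add
        ((hasDerivAt_wtInt z).const_mul B)).hasDerivWithinAt)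
      (fun z hz => by linarith [(abs_le.1 (hd z hz)).2])
  have := h1 (left_mem_Icc.2 hxy) (right_mem_Icc.2 hxy) hxy
  have := h2 (left_mem_Icc.2 hxy) (right_mem_Icc.2 hxy) hxy
  simp only at *
  rw [abs_le]
  constructor <;> linarith

lemma p_sub_le_wtInt (h : IsProfile c f p) {x y : ℝ} (hx : 0 ≤ x) (hxy : x ≤ y) :
    |p y - p x| ≤ c ^ 3 * (wtInt y - wtInt x) :=
  h.p_sub_le hx hxy fun z hz => by
    rw [← mul_pow]
    have := h.f_bound (hx.trans hz.1)
    gcongr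

lemma continuous_growth (h : IsProfile c f p) : Continuous (growth f p) := by
  have := h.continuous_f
  have := h.cont_p
  unfold growth
  fun_prop

lemma growth_monotoneOn (h : IsProfile c f p) : MonotoneOn (growth f p) (Ici 0) := by
  have hd : ∀ z, 0 < z → HasDerivAt (growth f p) (sinh z * cosh z * p z ^ 2) z := by
    intro z hz
    have hs := sinh_pos_iff.2 hz
    have := ((((hasDerivAt_sinh z).mul (h.hasDeriv_p z hz)).pow 2).div_const 2).add
      (((h.hasDeriv_f z).pow 4).div_const 4)
    refine this.congr_deriv ?_
    simp
    field_simp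
    ring
  refine monotoneOn_of_hasDerivWithinAt_nonneg (convex_Ici 0) h.continuous_growth.continuousOn
    (fun z hz => (hd z (by simpa using hz)).hasDerivWithinAt) ?_
  intro z hz
  have hz : 0 < z := by simpa using hz
  have := sinh_pos_iff.2 hz
  have := cosh_pos z
  positivity

/-- Zeros are simple: if `f` and `f'` vanish together at `x`, then so does `growth`, hence it
vanishes on all of `[0, x]`, which contradicts `f' 0 = c ≠ 0`. -/
lemma growth_pos (h : IsProfile c f p) (hc : 0 < c) {x : ℝ} (hx : 0 < x) : 0 < growth f p x := by
  have hnn : ∀ z, 0 ≤ growth f p z := fun z => by unfold growth; positivity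
  refine (hnn x).lt_of_ne' fun h0 => ?_
  have hz : ∀ z ∈ Ioo 0 x, p z = 0 := by
    intro z hz
    have h1 : growth f p z ≤ 0 :=
      h0 ▸ h.growth_monotoneOn (mem_Ici.2 hz.1.le) (mem_Ici.2 hx.le) hz.2.le
    have hs := sinh_pos_iff.2 hz.1
    unfold growth at h1
    have h4 : 0 ≤ f z ^ 4 / 4 := by positivity
    have h2 : (sinh z * p z) ^ 2 = 0 := le_antisymm (by linarith) (sq_nonneg _)
    simpa [hs.ne'] using h2
  have h1 : Tendsto p (𝓝[>] 0) (𝓝 c) := by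
    have := h.cont_p.tendsto 0
    rw [h.p_zero] at this
    exact this.mono_left nhdsWithin_le_nhds
  have h2 : Tendsto p (𝓝[>] 0) (𝓝 0) := by
    refine tendsto_const_nhds.congr' ?_
    filter_upwards [Ioo_mem_nhdsGT hx] with z hz'
    exact (hz z hz').symm
  exact hc.ne' (tendsto_nhds_unique h1 h2)

lemma p_ne_zero (h : IsProfile c f p) (hc : 0 < c) {x : ℝ} (hx : 0 < x) (hfx : f x = 0) :
    p x ≠ 0 := by
  intro hp
  have := h.growth_pos hc hx
  simp [growth, hfx, hp] at this

/-- Beyond a point where the remaining mass of the weight is small there is at most one zero: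
between two zeros `x < y` the derivative vanishes at some `m`, and the maximum of `|f'|` on `[x, m]`
would be at most a fraction of itself. -/
lemma zero_unique_of_large (h : IsProfile c f p) (hc : 0 < c) {X : ℝ} (hX : 0 < X)
    (hsmall : c ^ 2 * (512 * exp (-(3 / 2) * X)) < 1) {x y : ℝ} (hx : X ≤ x) (hxy : x < y)
    (hfx : f x = 0) : f y ≠ 0 := by
  intro hfy
  have hx0 : 0 < x := hX.trans_le hx
  obtain ⟨m, hm, hpm⟩ := exists_hasDerivAt_eq_zero hxy h.continuous_f.continuousOn
    (hfx.trans hfy.symm) (fun z _ => h.hasDeriv_f z)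
  obtain ⟨z, hz, hmax⟩ := isCompact_Icc.exists_isMaxOn (nonempty_Icc.2 hm.1.le)
    (h.cont_p.abs.continuousOn)
  have hmax' : ∀ t ∈ Icc x m, |p t| ≤ |p z| := fun t ht => hmax ht
  have hz0 : 0 ≤ z := hx0.le.trans hz.1
  have hB : |p m - p z| ≤ (c ^ 2 * |p z|) * (wtInt m - wtInt z) := by
    refine h.p_sub_le hz0 hz.2 fun t ht => ?_
    have ht0 : 0 ≤ t := hz0.trans ht.1
    have hxt : x ≤ t := hz.1.trans ht.1
    have h1 : |f t| ≤ |p z| * t := by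
      have := h.f_sub_le hxt (B := |p z|) fun s hs => hmax' s ⟨hs.1, hs.2.trans ht.2⟩
      rw [hfx, sub_zero] at this
      refine this.trans ?_
      gcongr
      linarith
    have h2 := h.f_bound ht0
    calc |f t| ^ 3 = |f t| ^ 2 * |f t| := by ring
      _ ≤ (c * t) ^ 2 * (|p z| * t) := by gcongr
      _ = _ := by ring
  rw [hpm, zero_sub, abs_neg] at hB
  have htail : wtInt m - wtInt z ≤ 512 * exp (-(3 / 2) * X) :=
    (wtInt_tail hz0 hz.2).trans (by gcongr 512 * exp ?_; linarith [hz.1])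
  have hpz : 0 < |p z| :=
    (abs_pos.2 (h.p_ne_zero hc hx0 hfx)).trans_le (hmax' x (left_mem_Icc.2 hm.1.le))
  have : c ^ 2 * |p z| * (wtInt m - wtInt z) ≤ |p z| * (c ^ 2 * (512 * exp (-(3 / 2) * X))) := by
    calc _ ≤ c ^ 2 * |p z| * (512 * exp (-(3 / 2) * X)) := by gcongr
      _ = _ := by ring
  nlinarith

end IsProfile

/-- Exponentially small increments give convergence with the same exponential rate. -/
lemma exists_lim_of_exp {g : ℝ → ℝ} {C : ℝ}
    (h : ∀ x y, 0 ≤ x → x ≤ y → |g y - g x| ≤ C * exp (-(3 / 2) * x)) :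
    ∃ L, Tendsto g atTop (𝓝 L) ∧ ∀ x, 0 ≤ x → |g x - L| ≤ C * exp (-(3 / 2) * x) := by
  have ht : Tendsto (fun x : ℝ => C * exp (-(3 / 2) * x)) atTop (𝓝 0) := by
    have h1 : Tendsto (fun x : ℝ => -(3 / 2) * x) atTop atBot :=
      tendsto_id.const_mul_atTop_of_neg (by norm_num)
    simpa using (tendsto_exp_atBot.comp h1).const_mul C
  have hc : Cauchy (map g atTop) := by
    rw [Metric.cauchy_iff]
    refine ⟨inferInstance, fun ε hε => ?_⟩
    obtain ⟨N, hN0, hN⟩ := ((eventually_ge_atTop (0 : ℝ)).and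
      (ht.eventually (gt_mem_nhds (half_pos hε)))).exists
    refine ⟨g '' Ici N, image_mem_map (Ici_mem_atTop N), ?_⟩
    rintro _ ⟨x, hx, rfl⟩ _ ⟨y, hy, rfl⟩
    have h1 := h N x hN0 hx
    have h2 := h N y hN0 hy
    rw [dist_eq]
    have := abs_sub_le (g x) (g N) (g y)
    rw [abs_sub_comm (g N)] at this
    linarith
  obtain ⟨L, hL⟩ := CompleteSpace.complete hc
  refine ⟨L, hL, fun x hx => ?_⟩
  have h1 : Tendsto (fun y => |g y - g x|) atTop (𝓝 |L - g x|) := (Tendsto.sub_const hL _).abs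
  rw [abs_sub_comm]
  exact le_of_tendsto h1 ((eventually_ge_atTop x).mono fun y hy => h x y hx hy)

/-- Version of `exists_lim_of_exp` with the hypothesis on the derivative. -/
lemma exists_lim_of_deriv_exp {g g' : ℝ → ℝ} {C : ℝ} (hg : ∀ x, HasDerivAt g (g' x) x)
    (h : ∀ x, 0 ≤ x → |g' x| ≤ C * exp (-(3 / 2) * x)) :
    ∃ L, Tendsto g atTop (𝓝 L) := by
  have hC : 0 ≤ C := by simpa using (abs_nonneg _).trans (h 0 le_rfl)
  have hE : ∀ z, HasDerivAt (fun z => C * exp (-(3 / 2) * z))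
      (C * (exp (-(3 / 2) * z) * (-(3 / 2) * 1))) z := fun z =>
    ((hasDerivAt_id z).const_mul _).exp.const_mul _
  have hn : ∀ z, 0 ≤ C * exp (-(3 / 2) * z) := fun z => by positivity
  have h1 : AntitoneOn (fun z => g z + C * exp (-(3 / 2) * z)) (Ici 0) :=
    antitoneOn_of_hasDerivWithinAt_nonpos (convex_Ici 0)
      (fun z _ => ((hg z).add (hE z)).continuousAt.continuousWithinAt)
      (fun z _ => ((hg z).add (hE z)).hasDerivWithinAt)
      (fun z hz => by
        have := (abs_le.1 (h z (interior_subset hz))).2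
        linarith [hn z])
  have h2 : MonotoneOn (fun z => g z - C * exp (-(3 / 2) * z)) (Ici 0) :=
    monotoneOn_of_hasDerivWithinAt_nonneg (convex_Ici 0)
      (fun z _ => ((hg z).sub (hE z)).continuousAt.continuousWithinAt)
      (fun z _ => ((hg z).sub (hE z)).hasDerivWithinAt)
      (fun z hz => by
        have := (abs_le.1 (h z (interior_subset hz))).1
        linarith [hn z])
  obtain ⟨L, hL, -⟩ := exists_lim_of_exp (g := g) (C := C) fun x y hx hxy => by
    have a1 := h1 hx (hx.trans hxy : 0 ≤ y) hxy
    have a2 := h2 hx (hx.trans hxy : 0 ≤ y) hxy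
    simp only at a1 a2
    rw [abs_le]
    constructor <;> linarith [hn x, hn y]
  exact ⟨L, hL⟩

namespace IsProfile

variable {c : ℝ} {f p : ℝ → ℝ}

/-- Every solution is asymptotically linear. -/
lemma asymptotics (h : IsProfile c f p) : ∃ F L, Tendsto p atTop (𝓝 F) ∧
    (∀ x, 0 ≤ x → |p x - F| ≤ c ^ 3 * 512 * exp (-(3 / 2) * x)) ∧
    Tendsto (fun x => f x - F * x) atTop (𝓝 L) := by
  have hc := h.slope_nonneg
  obtain ⟨F, hF, hF'⟩ := exists_lim_of_exp (g := p) (C := c ^ 3 * 512) fun x y hx hxy => by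
    refine (h.p_sub_le_wtInt hx hxy).trans ?_
    rw [mul_assoc]
    gcongr
    exact wtInt_tail hx hxy
  obtain ⟨L, hL⟩ := exists_lim_of_deriv_exp (g := fun x => f x - F * x) (g' := fun x => p x - F * 1)
    (fun x => (h.hasDeriv_f x).sub ((hasDerivAt_id x).const_mul F))
    (fun x hx => by simpa using hF' x hx)
  exact ⟨F, L, hF, hF', hL⟩

/-- If `f'` decays like `exp (-3x/2)`, then `sinh * f' → 0`, so `L⁴ / 4` is the limit of the
positive increasing quantity `growth`. -/
lemma lim_ne_zero (h : IsProfile c f p) (hc : 0 < c)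
    (hp : ∀ x, 0 ≤ x → |p x| ≤ c ^ 3 * 512 * exp (-(3 / 2) * x)) {L : ℝ}
    (hL : Tendsto f atTop (𝓝 L)) : L ≠ 0 := by
  rintro rfl
  have hs : Tendsto (fun x => sinh x * p x) atTop (𝓝 0) := by
    have h1 : Tendsto (fun x : ℝ => -(1 / 2) * x) atTop atBot :=
      tendsto_id.const_mul_atTop_of_neg (by norm_num)
    have h2 := (tendsto_exp_atBot.comp h1).const_mul (c ^ 3 * 512)
    rw [mul_zero] at h2
    refine squeeze_zero_norm' ?_ h2
    filter_upwards [eventually_ge_atTop 0] with x hx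
    have h3 : sinh x ≤ exp x := by rw [sinh_eq]; linarith [exp_pos x, exp_pos (-x)]
    have h4 := sinh_nonneg_iff.2 hx
    rw [norm_mul, norm_of_nonneg h4, norm_eq_abs]
    calc _ ≤ exp x * (c ^ 3 * 512 * exp (-(3 / 2) * x)) := by gcongr; exact hp x hx
      _ = c ^ 3 * 512 * (exp x * exp (-(3 / 2) * x)) := by ring
      _ = _ := by rw [← exp_add]; simp only [Function.comp]; ring_nf
  have hg : Tendsto (growth f p) atTop (𝓝 (0 ^ 2 / 2 + 0 ^ 4 / 4)) :=
    ((hs.pow 2).div_const 2).add ((hL.pow 4).div_const 4)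
  have h1 : growth f p 1 ≤ 0 ^ 2 / 2 + 0 ^ 4 / 4 := by
    refine ge_of_tendsto hg ?_
    filter_upwards [eventually_ge_atTop 1] with x hx
    exact h.growth_monotoneOn (mem_Ici.2 zero_le_one) (mem_Ici.2 (zero_le_one.trans hx)) hx
  have := h.growth_pos hc one_pos
  norm_num at h1
  linarith

end IsProfile

/-! ### Oscillation for large slopes -/

lemma sinh_le_two_mul {x : ℝ} (h0 : 0 ≤ x) (h1 : x ≤ 1) : sinh x ≤ 2 * x := by
  have hd : ∀ z, HasDerivAt (fun z => 2 * z - sinh z) (2 * 1 - cosh z) z := fun z =>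
    ((hasDerivAt_id z).const_mul 2).sub (hasDerivAt_sinh z)
  have hc : cosh 1 ≤ 2 := by
    rw [cosh_eq]
    have := exp_one_lt_d9
    have : exp (-1 : ℝ) ≤ 1 := exp_le_one_iff.2 (by norm_num)
    linarith
  have key : MonotoneOn (fun z => 2 * z - sinh z) (Icc 0 1) := by
    refine monotoneOn_of_hasDerivWithinAt_nonneg (convex_Icc 0 1)
      (fun z _ => (hd z).continuousAt.continuousWithinAt)
      (fun z _ => (hd z).hasDerivWithinAt) ?_
    intro z hz
    rw [interior_Icc] at hz
    have : cosh z ≤ cosh 1 := by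
      rw [cosh_le_cosh, abs_of_pos hz.1, abs_one]; exact hz.2.le
    linarith
  have := key (by simp) ⟨h0, h1⟩ h0
  simp at this
  linarith

/-- A ratio `b / a` such that a positive solution with `growth ≥ 1/8` cannot increase throughout
`[a, b] ⊆ (0, 1]`. -/
noncomputable def turnRatio : ℝ := 4 * exp 576

/-- A ratio `b / a` such that a solution with `growth ≥ 1/8` has a zero in `(a, b] ⊆ (0, 1]`. -/
noncomputable def zeroRatio : ℝ := 1154 * turnRatio

lemma turnRatio_gt : 4 < turnRatio := by
  have : 1 < exp 576 := one_lt_exp_iff.2 (by norm_num)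
  unfold turnRatio; linarith

lemma hasDerivAt_quarter_inv (M : ℝ) {y : ℝ} (hy : 0 < y) :
    HasDerivAt (fun y => M / (4 * y)) (-(M / (4 * y ^ 2))) y := by
  have := (hasDerivAt_inv hy.ne').const_mul (M / 4)
  refine (this.congr_deriv (by field_simp)).congr_of_eventuallyEq ?_
  filter_upwards with z
  rw [div_mul_eq_div_div, div_eq_mul_inv _ z]

/-- While `f ≥ m ≥ 0` on `[x, y] ⊆ (0, 1]`, the slope drops by at least the integral of
`m³ / (2 s)²`. -/
lemma slope_drop {f p : ℝ → ℝ}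
    (hp : ∀ x, 0 < x → HasDerivAt p (-(f x ^ 3 / sinh x ^ 2)) x) {x y m : ℝ} (hx : 0 < x)
    (hxy : x ≤ y) (hy : y ≤ 1) (hm : 0 ≤ m) (hfm : ∀ z ∈ Icc x y, m ≤ f z) :
    p y + m ^ 3 / (4 * x) - m ^ 3 / (4 * y) ≤ p x := by
  have hd : ∀ z ∈ Icc x y, HasDerivAt (fun z => p z - m ^ 3 / (4 * z))
      (-(f z ^ 3 / sinh z ^ 2) - -(m ^ 3 / (4 * z ^ 2))) z := fun z hz =>
    (hp z (hx.trans_le hz.1)).sub (hasDerivAt_quarter_inv _ (hx.trans_le hz.1))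
  have key : AntitoneOn (fun z => p z - m ^ 3 / (4 * z)) (Icc x y) := by
    refine antitoneOn_of_hasDerivWithinAt_nonpos (convex_Icc x y)
      (fun z hz => (hd z hz).continuousAt.continuousWithinAt)
      (fun z hz => (hd z (interior_subset hz)).hasDerivWithinAt) ?_
    intro z hz
    have hz := interior_subset hz
    have hz0 := hx.trans_le hz.1
    have hs := sinh_pos_iff.2 hz0
    have h2 := sinh_le_two_mul hz0.le (hz.2.trans hy)
    have h3 : m ^ 3 / (4 * z ^ 2) ≤ f z ^ 3 / sinh z ^ 2 := by
      have h5 := hfm z hz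
      have h6 := hm.trans h5
      have : sinh z ^ 2 ≤ 4 * z ^ 2 := by
        calc sinh z ^ 2 ≤ (2 * z) ^ 2 := by gcongr
          _ = _ := by ring
      gcongr
    linarith
  have := key (left_mem_Icc.2 hxy) (right_mem_Icc.2 hxy) hxy
  simp only at this
  linarith

/-- If `growth ≥ 1/8` while `f` is small, then the slope is not small. -/
lemma slope_of_small {f p : ℝ → ℝ} {x : ℝ} (hx0 : 0 < x) (hx1 : x ≤ 1)
    (hg : 1 / 8 ≤ growth f p x) (hf0 : 0 ≤ f x) (hf : f x < 1 / 12) : 1 / (5 * x) ≤ |p x| := by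
  have h4 : f x ^ 4 ≤ (1 / 12) ^ 4 := by gcongr
  unfold growth at hg
  have hs0 := sinh_pos_iff.2 hx0
  have hs := sinh_le_two_mul hx0.le hx1
  have h1 : 2 / 5 ≤ |sinh x * p x| := by
    rw [← abs_of_pos (show (0 : ℝ) < 2 / 5 by norm_num)]
    refine sq_le_sq.1 ?_
    norm_num at h4 ⊢
    linarith
  rw [abs_mul, abs_of_pos hs0] at h1
  have h2 : 2 / 5 ≤ 2 * x * |p x| := h1.trans (by gcongr)
  rw [div_le_iff₀ (by positivity)]
  linarith

/-- A solution that is positive on `(a, b]` with `growth ≥ 1/8` cannot keep increasing there once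
`b / a` is large: with `f ≥ 1/12` on `[2a, b]`, a positive slope at `b` forces
`x f' ≥ f³ / 8` on `[2a, b/2]`, so that `1 / f²` would become negative. -/
lemma exists_turn {f p : ℝ → ℝ} (hf : ∀ x, 0 < x → HasDerivAt f (p x) x)
    (hp : ∀ x, 0 < x → HasDerivAt p (-(f x ^ 3 / sinh x ^ 2)) x) {a : ℝ} (ha : 0 < a)
    (hb1 : turnRatio * a ≤ 1) (hg : ∀ x, a ≤ x → 1 / 8 ≤ growth f p x)
    (hpos : ∀ x ∈ Ioc a (turnRatio * a), 0 < f x) (ha0 : 0 ≤ f a) :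
    ∃ m ∈ Icc a (turnRatio * a), p m ≤ 0 := by
  by_contra! hcon
  set b := turnRatio * a with hb
  have hab : 4 * a < b := by have := turnRatio_gt; rw [hb]; gcongr
  have hfmono : MonotoneOn f (Icc a b) :=
    monotoneOn_of_hasDerivWithinAt_nonneg (convex_Icc a b)
      (fun z hz => (hf z (ha.trans_le hz.1)).continuousAt.continuousWithinAt)
      (fun z hz => (hf z (ha.trans_le (interior_subset hz).1)).hasDerivWithinAt)
      (fun z hz => (hcon z (interior_subset hz)).le)
  have hfnn : ∀ z ∈ Icc a b, 0 ≤ f z := fun z hz =>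
    ha0.trans (hfmono ⟨le_rfl, by linarith⟩ hz hz.1)
  have hpanti : AntitoneOn p (Icc a b) :=
    antitoneOn_of_hasDerivWithinAt_nonpos (convex_Icc a b)
      (fun z hz => (hp z (ha.trans_le hz.1)).continuousAt.continuousWithinAt)
      (fun z hz => (hp z (ha.trans_le (interior_subset hz).1)).hasDerivWithinAt)
      (fun z hz => by
        have := hfnn z (interior_subset hz)
        rw [neg_nonpos]; positivity)
  have m2 : 2 * a ∈ Icc a b := ⟨by linarith, by linarith⟩
  have hf2 : 1 / 12 ≤ f (2 * a) := by
    by_contra! hlt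
    have h1 := slope_of_small (by linarith) (by linarith) (hg (2 * a) m2.1) (hfnn _ m2) hlt
    rw [abs_of_pos (hcon _ m2)] at h1
    obtain ⟨z, hz, hzeq⟩ := exists_hasDerivAt_eq_slope f p (show a < 2 * a by linarith)
      (fun z hz => (hf z (ha.trans_le hz.1)).continuousAt.continuousWithinAt)
      (fun z hz => hf z (ha.trans hz.1))
    have h2 := hpanti ⟨hz.1.le, by linarith [hz.2]⟩ m2 hz.2.le
    rw [eq_div_iff (by linarith)] at hzeq
    have h3 : 1 / (5 * (2 * a)) * (2 * a - a) ≤ p z * (2 * a - a) := by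
      gcongr
      · linarith
      · exact h1.trans h2
    have h4 : 1 / (5 * (2 * a)) * (2 * a - a) = 1 / 10 := by field_simp; ring
    linarith
  have hslope : ∀ x ∈ Icc (2 * a) (b / 2), f x ^ 3 / (8 * x) ≤ p x := by
    intro x hx
    have hx0 : 0 < x := by linarith [hx.1]
    have hxb : x ≤ b := by linarith [hx.2]
    have mx : x ∈ Icc a b := ⟨by linarith [hx.1], hxb⟩
    have h1 := slope_drop hp hx0 hxb hb1 (hfnn x mx)
      fun z hz => hfmono mx ⟨mx.1.trans hz.1, hz.2⟩ hz.1
    have h2 := hcon b ⟨by linarith, le_rfl⟩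
    have h3 : f x ^ 3 / (4 * b) ≤ f x ^ 3 / (8 * x) := by
      have := hfnn x mx
      gcongr f x ^ 3 / ?_
      linarith [hx.2]
    have h4 : f x ^ 3 / (4 * x) = f x ^ 3 / (8 * x) + f x ^ 3 / (8 * x) := by field_simp; ring
    linarith
  have hfpos : ∀ x ∈ Icc (2 * a) (b / 2), 0 < f x := fun x hx =>
    hpos x ⟨by linarith [hx.1], by linarith [hx.2]⟩
  have hd : ∀ x ∈ Icc (2 * a) (b / 2), HasDerivAt (fun x => (f x ^ 2)⁻¹ + log x / 4)
      (-((2 : ℕ) * f x ^ (2 - 1) * p x) / (f x ^ 2) ^ 2 + x⁻¹ / 4) x := by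
    intro x hx
    have hx0 : 0 < x := by linarith [hx.1]
    exact (((hf x hx0).pow 2).inv (pow_ne_zero 2 (hfpos x hx).ne')).add
      ((hasDerivAt_log hx0.ne').div_const 4)
  have key : AntitoneOn (fun x => (f x ^ 2)⁻¹ + log x / 4) (Icc (2 * a) (b / 2)) := by
    refine antitoneOn_of_hasDerivWithinAt_nonpos (convex_Icc _ _)
      (fun z hz => (hd z hz).continuousAt.continuousWithinAt)
      (fun z hz => (hd z (interior_subset hz)).hasDerivWithinAt) ?_
    intro x hx
    have hx := interior_subset hx
    have hx0 : 0 < x := by linarith [hx.1]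
    have h1 := hslope x hx
    have h2 := hfpos x hx
    have e : -((2 : ℕ) * f x ^ (2 - 1) * p x) / (f x ^ 2) ^ 2 + x⁻¹ / 4 =
        2 / f x ^ 3 * (f x ^ 3 / (8 * x) - p x) := by
      push_cast
      field_simp
      ring
    rw [e]
    exact mul_nonpos_of_nonneg_of_nonpos (by positivity) (by linarith)
  have l1 : 2 * a ≤ b / 2 := by linarith
  have h1 := key (left_mem_Icc.2 l1) (right_mem_Icc.2 l1) l1
  simp only at h1
  have h2 : (f (2 * a) ^ 2)⁻¹ ≤ 144 := by
    have : ((f (2 * a)) ^ 2)⁻¹ ≤ ((1 / 12 : ℝ) ^ 2)⁻¹ := by gcongr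
    norm_num at this
    linarith
  have h3 : 0 < (f (b / 2) ^ 2)⁻¹ := by
    have := hfpos _ (right_mem_Icc.2 l1); positivity
  -- `turnRatio` is chosen so that `log (b / (4 a)) / 4 = 144`
  have h4 : log (b / 2) = log (2 * a) + 576 := by
    rw [show b / 2 = 2 * a * exp 576 by rw [hb, turnRatio]; ring,
      log_mul (by positivity) (exp_pos _).ne', log_exp]
  linarith

/-- Once decreasing, a positive solution with `growth ≥ 1/8` hits zero within a bounded ratio. -/
lemma false_of_turn {f p : ℝ → ℝ} (hf : ∀ x, 0 < x → HasDerivAt f (p x) x)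
    (hp : ∀ x, 0 < x → HasDerivAt p (-(f x ^ 3 / sinh x ^ 2)) x) {m : ℝ} (hm : 0 < m)
    (hb1 : 1154 * m ≤ 1) (hg : ∀ x, m ≤ x → 1 / 8 ≤ growth f p x)
    (hpos : ∀ x ∈ Ioc m (1154 * m), 0 < f x) (hpm : p m ≤ 0) : False := by
  set b := 1154 * m with hb
  have hpanti : AntitoneOn p (Icc m b) :=
    antitoneOn_of_hasDerivWithinAt_nonpos (convex_Icc m b)
      (fun z hz => (hp z (hm.trans_le hz.1)).continuousAt.continuousWithinAt)
      (fun z hz => (hp z (hm.trans_le (interior_subset hz).1)).hasDerivWithinAt)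
      (fun z hz => by
        rw [interior_Icc] at hz
        have := hpos z ⟨hz.1, hz.2.le⟩
        rw [neg_nonpos]; positivity)
  have hmm : m ∈ Icc m b := ⟨le_rfl, by linarith⟩
  have hfanti : AntitoneOn f (Icc m b) :=
    antitoneOn_of_hasDerivWithinAt_nonpos (convex_Icc m b)
      (fun z hz => (hf z (hm.trans_le hz.1)).continuousAt.continuousWithinAt)
      (fun z hz => (hf z (hm.trans_le (interior_subset hz).1)).hasDerivWithinAt)
      (fun z hz => (hpanti hmm (interior_subset hz) (interior_subset hz).1).trans hpm)
  have m2 : 2 * m ∈ Icc m b := ⟨by linarith, by linarith⟩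
  have hF := hpos (2 * m) ⟨by linarith, by linarith⟩
  have hdrop := slope_drop hp hm m2.1 (by linarith) hF.le
    fun z hz => hfanti ⟨hz.1, hz.2.trans m2.2⟩ m2 hz.2
  have hsteep : p (2 * m) * (1152 * m) ≤ -f (2 * m) := by
    by_cases hlt : f (2 * m) < 1 / 12
    · have h1 := slope_of_small (by linarith) (by linarith) (hg (2 * m) m2.1) hF.le hlt
      rw [abs_of_nonpos ((hpanti hmm m2 m2.1).trans hpm), div_le_iff₀ (by linarith)] at h1
      linarith
    · have e : f (2 * m) ^ 3 / (4 * m) - f (2 * m) ^ 3 / (4 * (2 * m)) =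
          f (2 * m) ^ 3 / (8 * m) := by field_simp; ring
      have h1 : f (2 * m) ^ 3 / (8 * m) ≤ -p (2 * m) := by linarith
      rw [div_le_iff₀ (by linarith)] at h1
      have h2 : f (2 * m) ≤ 144 * f (2 * m) ^ 3 := by
        have : (1 / 12 : ℝ) ^ 2 ≤ f (2 * m) ^ 2 := by gcongr; linarith
        nlinarith
      linarith
  have h2b : 2 * m < b := by linarith
  obtain ⟨z, hz, hzeq⟩ := exists_hasDerivAt_eq_slope f p h2b
    (fun z hz => (hf z (by linarith [hz.1])).continuousAt.continuousWithinAt)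
    (fun z hz => hf z (by linarith [hz.1]))
  rw [eq_div_iff (by linarith)] at hzeq
  have h3 := hpanti m2 ⟨by linarith [hz.1], hz.2.le⟩ hz.1.le
  have h4 : p z * (b - 2 * m) ≤ p (2 * m) * (b - 2 * m) := by gcongr
  have h5 : b - 2 * m = 1152 * m := by rw [hb]; ring
  rw [h5] at h4 hzeq
  have := hpos b ⟨by linarith, le_rfl⟩
  linarith

/-- No solution with `growth ≥ 1/8` is positive on a whole window `(a, zeroRatio * a]`. -/
lemma exists_zero_aux {f p : ℝ → ℝ} (hf : ∀ x, 0 < x → HasDerivAt f (p x) x)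
    (hp : ∀ x, 0 < x → HasDerivAt p (-(f x ^ 3 / sinh x ^ 2)) x) {a : ℝ} (ha : 0 < a)
    (hb1 : zeroRatio * a ≤ 1) (hg : ∀ x, a ≤ x → 1 / 8 ≤ growth f p x)
    (hpos : ∀ x ∈ Ioc a (zeroRatio * a), 0 < f x) : False := by
  have hr := turnRatio_gt
  have e : zeroRatio * a = 1154 * (turnRatio * a) := by unfold zeroRatio; ring
  have hta : 0 < turnRatio * a := by positivity
  rw [e] at hb1 hpos
  have ha0 : 0 ≤ f a := by
    refine ge_of_tendsto ((hf a ha).continuousAt.tendsto.mono_left nhdsWithin_le_nhds :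
      Tendsto f (𝓝[>] a) _) ?_
    have : a < 1154 * (turnRatio * a) := by nlinarith
    filter_upwards [Ioo_mem_nhdsGT this] with z hz
    exact (hpos z ⟨hz.1, hz.2.le⟩).le
  obtain ⟨m, hm, hpm⟩ := exists_turn hf hp ha (by linarith) hg
    (fun x hx => hpos x ⟨hx.1, by linarith [hx.2]⟩) ha0
  exact false_of_turn hf hp (ha.trans_le hm.1) (by linarith [hm.2])
    (fun x hx => hg x (hm.1.trans hx))
    (fun x hx => hpos x ⟨hm.1.trans_lt hx.1, by linarith [hx.2, hm.2]⟩) hpm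

namespace IsProfile

variable {c : ℝ} {f p : ℝ → ℝ}

/-- At `x = 1 / c` the slope is still at least `c / 2`, whence `sinh x * f' ≥ 1/2`. -/
lemma growth_ge (h : IsProfile c f p) (hc : 0 < c) {x : ℝ} (hx : 1 / c ≤ x) :
    1 / 8 ≤ growth f p x := by
  have hc1 : 0 < 1 / c := by positivity
  have h1 : wtInt (1 / c) ≤ (1 / c) ^ 2 / 2 := by
    have hd : ∀ z, HasDerivAt (fun z => z ^ 2 / 2 - wtInt z) ((2 : ℕ) * z ^ (2 - 1) / 2 - wt z) z :=
      fun z => ((hasDerivAt_pow 2 z).div_const 2).sub (hasDerivAt_wtInt z)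
    have key : MonotoneOn (fun z => z ^ 2 / 2 - wtInt z) (Ici 0) := by
      refine monotoneOn_of_hasDerivWithinAt_nonneg (convex_Ici 0)
        (fun z _ => (hd z).continuousAt.continuousWithinAt)
        (fun z _ => (hd z).hasDerivWithinAt) ?_
      intro z hz
      have := wt_le_self (s := z) (interior_subset hz)
      norm_num
      linarith
    have := key (self_mem_Ici) hc1.le hc1.le
    simp [wtInt_zero] at this
    simp
    linarith
  have h2 := h.p_sub_le_wtInt le_rfl hc1.le
  rw [h.p_zero, wtInt_zero, sub_zero] at h2
  have h3 : c ^ 3 * wtInt (1 / c) ≤ c / 2 := by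
    calc _ ≤ c ^ 3 * ((1 / c) ^ 2 / 2) := by gcongr
      _ = _ := by field_simp
  have h4 : c / 2 ≤ p (1 / c) := by linarith [(abs_le.1 h2).1]
  have h5 : 1 / c ≤ sinh (1 / c) := self_le_sinh_iff.2 hc1.le
  have h6 : 1 / 2 ≤ sinh (1 / c) * p (1 / c) := by
    calc 1 / 2 = 1 / c * (c / 2) := by field_simp
      _ ≤ _ := by gcongr
  have h7 : 1 / 8 ≤ growth f p (1 / c) := by
    unfold growth
    have : (1 / 2 : ℝ) ^ 2 ≤ (sinh (1 / c) * p (1 / c)) ^ 2 := by gcongr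
    have : 0 ≤ f (1 / c) ^ 4 / 4 := by positivity
    linarith
  exact h7.trans (h.growth_monotoneOn (mem_Ici.2 hc1.le) (mem_Ici.2 (hc1.le.trans hx)) hx)

lemma exists_zero (h : IsProfile c f p) (hc : 0 < c) {a : ℝ} (ha : 1 / c ≤ a)
    (hb : zeroRatio * a ≤ 1) : ∃ x ∈ Ioc a (zeroRatio * a), f x = 0 := by
  have ha0 : 0 < a := (by positivity : 0 < 1 / c).trans_le ha
  by_contra! hne
  have hg : ∀ x, a ≤ x → 1 / 8 ≤ growth f p x := fun x hx => h.growth_ge hc (ha.trans hx)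
  have hsign : (∀ x ∈ Ioc a (zeroRatio * a), 0 < f x) ∨
      (∀ x ∈ Ioc a (zeroRatio * a), f x < 0) := by
    by_contra! hcon
    obtain ⟨⟨x, hx, hfx⟩, y, hy, hfy⟩ := hcon
    obtain ⟨z, hz, hfz⟩ := isPreconnected_Ioc.intermediate_value hx hy
      h.continuous_f.continuousOn ⟨hfx, hfy⟩
    exact hne z hz hfz
  rcases hsign with hs | hs
  · exact exists_zero_aux (fun x _ => h.hasDeriv_f x) h.hasDeriv_p ha0 hb hg hs
  · refine exists_zero_aux (f := fun x => -f x) (p := fun x => -p x)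
      (fun x _ => (h.hasDeriv_f x).neg) (fun x hx => ?_) ha0 hb (fun x hx => ?_)
      (fun x hx => neg_pos.2 (hs x hx))
    · refine (h.hasDeriv_p x hx).neg.congr_deriv ?_
      ring
    · refine (hg x hx).trans (le_of_eq ?_)
      unfold growth; ring

/-- A slope `zeroRatio ^ N` leaves room on `(0, 1]` for `N` disjoint windows, each with a zero. -/
lemma many_zeros (N : ℕ) (h : IsProfile (zeroRatio ^ N) f p) :
    (N : ℕ∞) ≤ {x : ℝ | 0 < x ∧ f x = 0}.encard := by
  have hK : 1 < zeroRatio := by have := turnRatio_gt; unfold zeroRatio; linarith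
  have hK0 : 0 < zeroRatio := zero_lt_one.trans hK
  have hcN : 0 < zeroRatio ^ N := by positivity
  have hz : ∀ j : Fin N, ∃ x ∈ Ioc (zeroRatio ^ (j : ℕ) / zeroRatio ^ N)
      (zeroRatio ^ ((j : ℕ) + 1) / zeroRatio ^ N), f x = 0 := by
    intro j
    have e : zeroRatio ^ ((j : ℕ) + 1) / zeroRatio ^ N =
        zeroRatio * (zeroRatio ^ (j : ℕ) / zeroRatio ^ N) := by rw [pow_succ]; ring
    rw [e]
    refine h.exists_zero hcN ?_ ?_
    · gcongr; exact one_le_pow₀ hK.le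
    · rw [← e, div_le_one hcN]
      exact pow_le_pow_right₀ hK.le j.2
  choose z hzm hz0 using hz
  have hmono : StrictMono z := by
    intro i j hij
    have h1 := (hzm i).2
    have h2 := (hzm j).1
    have h3 : zeroRatio ^ ((i : ℕ) + 1) / zeroRatio ^ N ≤ zeroRatio ^ (j : ℕ) / zeroRatio ^ N := by
      gcongr
      · exact hK.le
      · exact hij
    linarith
  have hr : range z ⊆ {x : ℝ | 0 < x ∧ f x = 0} := by
    rintro _ ⟨j, rfl⟩
    exact ⟨(by positivity : 0 < zeroRatio ^ (j : ℕ) / zeroRatio ^ N).trans (hzm j).1, hz0 j⟩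
  calc (N : ℕ∞) = (range z).encard := by
        rw [← image_univ, hmono.injective.encard_image]; simp
    _ ≤ _ := encard_le_encard hr

/-- For small slopes `f' > 0` throughout. -/
lemma no_zeros (h : IsProfile c f p) (hc : 0 < c) (hsmall : c ^ 2 * 512 < 1) :
    {x : ℝ | 0 < x ∧ f x = 0} = ∅ := by
  rw [eq_empty_iff_forall_notMem]
  rintro x ⟨hx, hfx⟩
  obtain ⟨z, hz, hpz⟩ := exists_hasDerivAt_eq_zero hx h.continuous_f.continuousOn
    (h.f_zero.trans hfx.symm) (fun z _ => h.hasDeriv_f z)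
  have h1 := h.p_sub_le_wtInt le_rfl hz.1.le
  rw [hpz, h.p_zero, wtInt_zero, sub_zero, zero_sub, abs_neg, abs_of_pos hc] at h1
  have h2 := wtInt_le z
  have : c ^ 3 * wtInt z ≤ c ^ 3 * 512 := by gcongr
  nlinarith

end IsProfile

/-! ### Counting zeros and shooting -/

/-- A family of solutions indexed by the slope `c ∈ [0, R]`, Lipschitz in `c`; the Lipschitz
constant of the derivatives is uniform on the line, that of the functions grows linearly. -/
structure IsFamily (R : ℝ) (F P : ℝ → ℝ → ℝ) (C : ℝ) : Prop where
  profile : ∀ c ∈ Icc 0 R, IsProfile c (F c) (P c)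
  lip_P : ∀ c c' x, |P c x - P c' x| ≤ C * |c - c'|
  lip_F : ∀ c c' x, 0 ≤ x → |F c x - F c' x| ≤ C * |c - c'| * x
  const_pos : 0 < C

/-- The set of positive zeros. -/
def zeroSet (f : ℝ → ℝ) : Set ℝ := {x | 0 < x ∧ f x = 0}

namespace IsFamily

variable {R C : ℝ} {F P : ℝ → ℝ → ℝ}

lemma eventually_close (_ : IsFamily R F P C) (c₀ : ℝ) {η : ℝ} (hη : 0 < η) :
    ∀ᶠ c in 𝓝[Ioc 0 R] c₀, C * |c - c₀| < η := by
  have h1 : Continuous fun c => C * |c - c₀| := by fun_prop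
  have h2 := h1.tendsto c₀
  simp only [sub_self, abs_zero, mul_zero] at h2
  exact nhdsWithin_le_nhds (h2.eventually (gt_mem_nhds hη))

lemma tendsto_F (h : IsFamily R F P C) (c₀ : ℝ) {x : ℝ} (hx : 0 ≤ x) :
    Tendsto (fun c => F c x) (𝓝[Ioc 0 R] c₀) (𝓝 (F c₀ x)) := by
  rw [tendsto_iff_norm_sub_tendsto_zero]
  have h1 : Continuous fun c => C * |c - c₀| * x := by fun_prop
  have h2 := h1.tendsto c₀
  simp only [sub_self, abs_zero, mul_zero, zero_mul] at h2
  exact squeeze_zero (fun _ => norm_nonneg _) (fun c => h.lip_F c c₀ x hx)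
    (h2.mono_left nhdsWithin_le_nhds)

lemma P_ne_zero_near (h : IsFamily R F P C) {c₀ x₀ : ℝ} (hc₀ : c₀ ∈ Ioc 0 R)
    (hx : P c₀ x₀ ≠ 0) : ∃ ε > 0, ∀ᶠ c in 𝓝[Ioc 0 R] c₀, ∀ x ∈ Ioo (x₀ - ε) (x₀ + ε),
      P c x ≠ 0 := by
  have hη : 0 < |P c₀ x₀| / 2 := by positivity
  have hcont := (h.profile c₀ ⟨hc₀.1.le, hc₀.2⟩).cont_p.abs.tendsto x₀
  have h1 : ∀ᶠ x in 𝓝 x₀, |P c₀ x₀| / 2 < |P c₀ x| :=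
    hcont.eventually (lt_mem_nhds (half_lt_self (abs_pos.2 hx)))
  obtain ⟨ε, hε, hball⟩ := Metric.eventually_nhds_iff_ball.1 h1
  refine ⟨ε, hε, (h.eventually_close c₀ hη).mono fun c hc x hxε h0 => ?_⟩
  have h2 := hball x (by rwa [ball_eq_Ioo])
  have h3 := h.lip_P c c₀ x
  rw [h0, zero_sub, abs_neg] at h3
  linarith

open Classical in
/-- Locally in `x`, the number of zeros does not grow under small changes of the slope: this is
continuity away from the zeros, and Rolle's theorem at the (simple) zeros and at `x = 0`. -/
lemma local_count (h : IsFamily R F P C) {c₀ x₀ : ℝ} (hc₀ : c₀ ∈ Ioc 0 R) (hx₀ : 0 ≤ x₀) :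
    ∃ U ∈ 𝓝 x₀, ∀ᶠ c in 𝓝[Ioc 0 R] c₀,
      (zeroSet (F c) ∩ U).encard ≤ if x₀ ∈ zeroSet (F c₀) then 1 else 0 := by
  have hprof := h.profile c₀ ⟨hc₀.1.le, hc₀.2⟩
  have rolle : ∀ c ∈ Ioc 0 R, ∀ ε, (∀ x ∈ Ioo (x₀ - ε) (x₀ + ε), P c x ≠ 0) →
      ∀ x ∈ Ioo (x₀ - ε) (x₀ + ε), ∀ y ∈ Ioo (x₀ - ε) (x₀ + ε), F c x = 0 → F c y = 0 →
        ¬ x < y := by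
    intro c hc ε hε x hx y hy hfx hfy hxy
    have hpr := h.profile c ⟨hc.1.le, hc.2⟩
    obtain ⟨z, hz, hpz⟩ := exists_hasDerivAt_eq_zero hxy hpr.continuous_f.continuousOn
      (hfx.trans hfy.symm) (fun z _ => hpr.hasDeriv_f z)
    exact hε z ⟨hx.1.trans hz.1, hz.2.trans hy.2⟩ hpz
  rcases hx₀.eq_or_lt with rfl | hx₀
  · obtain ⟨ε, hε, hev⟩ := h.P_ne_zero_near (x₀ := 0) hc₀ (by rw [hprof.p_zero]; exact hc₀.1.ne')
    refine ⟨Ioo (0 - ε) (0 + ε), Ioo_mem_nhds (by linarith) (by linarith), ?_⟩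
    filter_upwards [hev, self_mem_nhdsWithin] with c hc hcR
    rw [if_neg (by simp [zeroSet]), nonpos_iff_eq_zero, encard_eq_zero,
      eq_empty_iff_forall_notMem]
    rintro x ⟨⟨hx, hfx⟩, hxU⟩
    exact rolle c hcR ε hc 0 ⟨by linarith, by linarith⟩ x hxU
      (h.profile c ⟨hcR.1.le, hcR.2⟩).f_zero hfx hx
  by_cases hz : F c₀ x₀ = 0
  · obtain ⟨ε, hε, hev⟩ := h.P_ne_zero_near (x₀ := x₀) hc₀ (hprof.p_ne_zero hc₀.1 hx₀ hz)
    refine ⟨Ioo (x₀ - ε) (x₀ + ε), Ioo_mem_nhds (by linarith) (by linarith), ?_⟩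
    filter_upwards [hev, self_mem_nhdsWithin] with c hc hcR
    rw [if_pos ⟨hx₀, hz⟩, encard_le_one_iff]
    rintro x y ⟨⟨-, hfx⟩, hx⟩ ⟨⟨-, hfy⟩, hy⟩
    exact le_antisymm (not_lt.1 (rolle c hcR ε hc y hy x hx hfy hfx))
      (not_lt.1 (rolle c hcR ε hc x hx y hy hfx hfy))
  · have hη : 0 < |F c₀ x₀| / 2 := by positivity
    have h1 : ∀ᶠ x in 𝓝 x₀, |F c₀ x₀| / 2 < |F c₀ x| :=
      (hprof.continuous_f.abs.tendsto x₀).eventually (lt_mem_nhds (half_lt_self (abs_pos.2 hz)))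
    refine ⟨{x | |F c₀ x₀| / 2 < |F c₀ x|} ∩ Iio (x₀ + 1),
      inter_mem h1 (Iio_mem_nhds (by linarith)), ?_⟩
    filter_upwards [h.eventually_close c₀ (div_pos hη (show 0 < x₀ + 1 by linarith))] with c hc
    rw [if_neg (fun hh => hz hh.2), nonpos_iff_eq_zero, encard_eq_zero,
      eq_empty_iff_forall_notMem]
    rintro x ⟨⟨hx, hfx⟩, hxU, hx1⟩
    have h2 := h.lip_F c c₀ x hx.le
    rw [hfx, zero_sub, abs_neg] at h2
    rw [lt_div_iff₀ (by linarith)] at hc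
    have hx1 : x < x₀ + 1 := hx1
    have hC := h.const_pos
    have : C * |c - c₀| * x ≤ C * |c - c₀| * (x₀ + 1) := by gcongr
    have : |F c₀ x₀| / 2 < |F c₀ x| := hxU
    linarith

/-- Upper semicontinuity of the number of zeros, up to those entering from infinity. -/
lemma count_le (h : IsFamily R F P C) {c₀ X : ℝ} (hc₀ : c₀ ∈ Ioc 0 R) {k : ℕ∞}
    (hX : ∀ᶠ c in 𝓝[Ioc 0 R] c₀, (zeroSet (F c) ∩ Ici X).encard ≤ k) :
    ∀ᶠ c in 𝓝[Ioc 0 R] c₀, (zeroSet (F c)).encard ≤ (zeroSet (F c₀)).encard + k := by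
  classical
  have hloc : ∀ x, ∃ U, 0 ≤ x → U ∈ 𝓝 x ∧ ∀ᶠ c in 𝓝[Ioc 0 R] c₀,
      (zeroSet (F c) ∩ U).encard ≤ if x ∈ zeroSet (F c₀) then 1 else 0 := by
    intro x
    by_cases hx : 0 ≤ x
    · obtain ⟨U, hU, hU'⟩ := h.local_count hc₀ hx
      exact ⟨U, fun _ => ⟨hU, hU'⟩⟩
    · exact ⟨∅, fun h => absurd h hx⟩
  choose U hU using hloc
  obtain ⟨t, ht, hcov⟩ := isCompact_Icc.elim_nhds_subcover (s := Icc 0 X) U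
    fun x hx => (hU x hx.1).1
  have hev := (Finset.eventually_all t).2 fun x hx => (hU x (ht x hx).1).2
  filter_upwards [hev, hX] with c hc hcX
  have hsub : zeroSet (F c) ⊆ (⋃ x ∈ t, zeroSet (F c) ∩ U x) ∪ (zeroSet (F c) ∩ Ici X) := by
    intro z hz
    rcases le_total X z with hzX | hzX
    · exact Or.inr ⟨hz, hzX⟩
    · left
      have := hcov ⟨hz.1.le, hzX⟩
      simp only [mem_iUnion] at this ⊢
      obtain ⟨x, hx, hxU⟩ := this
      exact ⟨x, hx, hz, hxU⟩
  calc (zeroSet (F c)).encard ≤ _ := encard_le_encard hsub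
    _ ≤ _ := encard_union_le _ _
    _ ≤ (zeroSet (F c₀)).encard + k := by
      refine add_le_add ?_ hcX
      calc _ ≤ ∑ x ∈ t, (zeroSet (F c) ∩ U x).encard := t.set_encard_biUnion_le _
        _ ≤ ∑ x ∈ t, if x ∈ zeroSet (F c₀) then 1 else 0 := Finset.sum_le_sum hc
        _ = ((t.filter (· ∈ zeroSet (F c₀)) : Finset ℝ) : Set ℝ).encard := by
          rw [encard_coe_eq_coe_finsetCard]; simp
        _ ≤ _ := encard_le_encard fun x hx => by simpa using (Finset.mem_filter.1 hx).2

lemma tail_le_one (h : IsFamily R F P C) (c₀ : ℝ) :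
    ∃ X, ∀ᶠ c in 𝓝[Ioc 0 R] c₀, (zeroSet (F c) ∩ Ici X).encard ≤ 1 := by
  have ht : Tendsto (fun x : ℝ => R ^ 2 * (512 * exp (-(3 / 2) * x))) atTop (𝓝 0) := by
    have h1 : Tendsto (fun x : ℝ => -(3 / 2) * x) atTop atBot :=
      tendsto_id.const_mul_atTop_of_neg (by norm_num)
    simpa using ((tendsto_exp_atBot.comp h1).const_mul 512).const_mul (R ^ 2)
  obtain ⟨X, hX0, hX⟩ := ((eventually_gt_atTop (0 : ℝ)).and
    (ht.eventually (gt_mem_nhds one_pos))).exists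
  refine ⟨X, ?_⟩
  filter_upwards [self_mem_nhdsWithin] with c hc
  have hsmall : c ^ 2 * (512 * exp (-(3 / 2) * X)) < 1 := by
    refine lt_of_le_of_lt ?_ hX
    have := hc.1.le
    gcongr
    exact hc.2
  have key : ∀ x y, X ≤ x → F c x = 0 → F c y = 0 → ¬ x < y := fun x y hx hfx hfy hxy =>
    (h.profile c ⟨hc.1.le, hc.2⟩).zero_unique_of_large hc.1 hX0 hsmall hx hxy hfx hfy
  rw [encard_le_one_iff]
  rintro x y ⟨⟨-, hfx⟩, hx⟩ ⟨⟨-, hfy⟩, hy⟩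
  exact le_antisymm (not_lt.1 (key y x hy hfy hfx)) (not_lt.1 (key x y hx hfx hfy))

/-- If `f / x` has a nonzero limit, no zero can enter from infinity. -/
lemma tail_eq_zero (h : IsFamily R F P C) (c₀ : ℝ) {A L : ℝ} (hA : A ≠ 0)
    (hL : Tendsto (fun x => F c₀ x - A * x) atTop (𝓝 L)) :
    ∃ X, ∀ᶠ c in 𝓝[Ioc 0 R] c₀, (zeroSet (F c) ∩ Ici X).encard ≤ 0 := by
  have h1 : Tendsto (fun x => (F c₀ x - A * x) / x) atTop (𝓝 0) := hL.div_atTop tendsto_id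
  have hη : 0 < |A| / 2 := by positivity
  obtain ⟨X, hX⟩ := eventually_atTop.1 (h1.abs.eventually
    (gt_mem_nhds (show |(0 : ℝ)| < |A| / 2 by rwa [abs_zero])))
  refine ⟨X, (h.eventually_close c₀ hη).mono fun c hc => ?_⟩
  rw [nonpos_iff_eq_zero, encard_eq_zero, eq_empty_iff_forall_notMem]
  rintro x ⟨⟨hx, hfx⟩, hxX⟩
  have h2 := hX x hxX
  rw [abs_div, abs_of_pos hx, div_lt_iff₀ hx] at h2
  have h3 := h.lip_F c c₀ x hx.le
  rw [hfx, zero_sub, abs_neg] at h3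
  have h4 : C * |c - c₀| * x < |A| / 2 * x := by gcongr
  have h5 : |A * x| ≤ |F c₀ x| + |F c₀ x - A * x| := by
    rw [abs_sub_comm]
    simpa using abs_add_le (F c₀ x) (A * x - F c₀ x)
  rw [abs_mul, abs_of_pos hx] at h5
  linarith

/-- Near a simple zero there are points on both sides where the function has opposite signs. -/
lemma sign_change {f : ℝ → ℝ} {f' x : ℝ} (hf : HasDerivAt f f' x) (hfx : f x = 0) (hf' : f' ≠ 0)
    {U : Set ℝ} (hU : U ∈ 𝓝 x) :
    ∃ a b, a < b ∧ Icc a b ⊆ U ∧ f a * f' < 0 ∧ 0 < f b * f' := by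
  obtain ⟨ε, hε, hball⟩ := Metric.mem_nhds_iff.1 hU
  rw [ball_eq_Ioo] at hball
  have hs : ∀ᶠ y in 𝓝[≠] x, 0 < slope f x y * f' :=
    ((hasDerivAt_iff_tendsto_slope.1 hf).mul_const f').eventually
      (lt_mem_nhds (mul_self_pos.2 hf'))
  have hsl : ∀ᶠ y in 𝓝[<] x, 0 < slope f x y * f' :=
    hs.filter_mono (nhdsWithin_mono x fun y hy => ne_of_lt hy)
  have hsr : ∀ᶠ y in 𝓝[>] x, 0 < slope f x y * f' :=
    hs.filter_mono (nhdsWithin_mono x fun y hy => ne_of_gt hy)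
  obtain ⟨a, ha, ha'⟩ := (hsl.and (Ioo_mem_nhdsLT (show x - ε < x by linarith))).exists
  obtain ⟨b, hb, hb'⟩ := (hsr.and (Ioo_mem_nhdsGT (show x < x + ε by linarith))).exists
  rw [slope_def_field, hfx, sub_zero, div_mul_eq_mul_div] at ha hb
  refine ⟨a, b, ha'.2.trans hb'.1, fun z hz => hball ⟨ha'.1.trans_le hz.1, hz.2.trans_lt hb'.2⟩,
    ?_, ?_⟩
  · by_contra! hc
    exact ha.not_ge (div_nonpos_of_nonneg_of_nonpos hc (by linarith [ha'.2]))
  · by_contra! hc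
    exact hb.not_ge (div_nonpos_of_nonpos_of_nonneg hc (by linarith [hb'.1]))

/-- Lower semicontinuity of the number of zeros: simple zeros persist. -/
lemma le_count (h : IsFamily R F P C) {c₀ : ℝ} (hc₀ : c₀ ∈ Ioc 0 R) {S : Set ℝ} (hS : S.Finite)
    (hSz : S ⊆ zeroSet (F c₀)) :
    ∀ᶠ c in 𝓝[Ioc 0 R] c₀, S.encard ≤ (zeroSet (F c)).encard := by
  have hprof := h.profile c₀ ⟨hc₀.1.le, hc₀.2⟩
  obtain ⟨U, hU, hdisj⟩ := hS.t2_separation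
  have hev : ∀ x ∈ S, ∀ᶠ c in 𝓝[Ioc 0 R] c₀, ∃ z ∈ U x, z ∈ zeroSet (F c) := by
    intro x hx
    obtain ⟨hx0, hfx⟩ := hSz hx
    obtain ⟨a, b, hab, hsub, hfa, hfb⟩ := sign_change (hprof.hasDeriv_f x) hfx
      (hprof.p_ne_zero hc₀.1 hx0 hfx)
      (inter_mem ((hU x).2.mem_nhds (hU x).1) (Ioi_mem_nhds hx0))
    have ha0 : 0 < a := (hsub (left_mem_Icc.2 hab.le)).2
    have h1 := ((h.tendsto_F c₀ ha0.le).mul_const (P c₀ x)).eventually (gt_mem_nhds hfa)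
    have h2 := ((h.tendsto_F c₀ (ha0.trans hab).le).mul_const (P c₀ x)).eventually
      (lt_mem_nhds hfb)
    filter_upwards [h1, h2, self_mem_nhdsWithin] with c hca hcb hcR
    have hcont := (h.profile c ⟨hcR.1.le, hcR.2⟩).continuous_f
    obtain ⟨z, hz, hfz⟩ := intermediate_value_Icc hab.le
      (f := fun y => F c y * P c₀ x) (by fun_prop) ⟨hca.le, hcb.le⟩
    refine ⟨z, (hsub hz).1, (hsub hz).2, ?_⟩
    exact (mul_eq_zero.1 hfz).resolve_right (hprof.p_ne_zero hc₀.1 hx0 hfx)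
  filter_upwards [(eventually_all_finite hS).2 hev] with c hc
  choose! z hzU hzZ using hc
  have hinj : InjOn z S := by
    intro x hx y hy hxy
    by_contra hne
    exact disjoint_left.1 (hdisj hx hy hne) (hzU x hx) (hxy ▸ hzU y hy)
  rw [← hinj.encard_image]
  refine encard_le_encard ?_
  rintro _ ⟨x, hx, rfl⟩
  exact hzZ x hx

/-- At the supremum `c₀` of the slopes with at most `n` zeros there are exactly `n` zeros and
`f' → 0`. -/
lemma exists_critical (h : IsFamily R F P C) (n : ℕ) {c₁ : ℝ} (hc₁ : c₁ ∈ Ioc 0 R)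
    (h₁ : (zeroSet (F c₁)).encard ≤ n) (hR : (n : ℕ∞) + 1 ≤ (zeroSet (F R)).encard) :
    ∃ c₀ ∈ Ioc 0 R, (zeroSet (F c₀)).encard = n ∧
      ∀ A L, Tendsto (fun x => F c₀ x - A * x) atTop (𝓝 L) → A = 0 := by
  set S : Set ℝ := {c | c ∈ Ioc 0 R ∧ (zeroSet (F c)).encard ≤ n} with hSdef
  have hSne : S.Nonempty := ⟨c₁, hc₁, h₁⟩
  have hSbdd : BddAbove S := ⟨R, fun c hc => hc.1.2⟩
  set c₀ := sSup S with hc₀def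
  have hc₀ : c₀ ∈ Ioc 0 R :=
    ⟨hc₁.1.trans_le (le_csSup hSbdd ⟨hc₁, h₁⟩), csSup_le hSne fun c hc => hc.1.2⟩
  have hn : (n : ℕ∞) ≠ ⊤ := ENat.natCast_ne_top n
  have hfreq : ∃ᶠ c in 𝓝[Ioc 0 R] c₀, (zeroSet (F c)).encard ≤ n := by
    rw [frequently_nhdsWithin_iff]
    exact (mem_closure_iff_frequently.1 (csSup_mem_closure hSne hSbdd)).mono
      fun c hc => ⟨hc.2, hc.1⟩
  have hle : (zeroSet (F c₀)).encard ≤ n := by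
    by_contra! hlt
    obtain ⟨T, hT, hTcard⟩ := exists_subset_encard_eq ((ENat.add_one_le_iff hn).2 hlt)
    have hTfin : T.Finite := finite_of_encard_eq_coe (k := n + 1) (by rw [hTcard]; simp)
    obtain ⟨c, hc1, hc2⟩ := (hfreq.and_eventually (h.le_count hc₀ hTfin hT)).exists
    rw [hTcard] at hc2
    exact ((ENat.add_one_le_iff hn).1 (hc2.trans hc1)).false
  have hlt : c₀ < R := hc₀.2.lt_of_ne fun he => by
    rw [he] at hle
    exact ((ENat.add_one_le_iff hn).1 (hR.trans hle)).false
  have hfreq' : ∃ᶠ c in 𝓝[Ioc 0 R] c₀, (n : ℕ∞) + 1 ≤ (zeroSet (F c)).encard := by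
    have h1 : ∀ᶠ c in 𝓝[>] c₀, c ∈ Ioc 0 R ∧ (n : ℕ∞) + 1 ≤ (zeroSet (F c)).encard := by
      filter_upwards [Ioo_mem_nhdsGT hlt] with c hc
      have hcR : c ∈ Ioc 0 R := ⟨hc₀.1.trans hc.1, hc.2.le⟩
      refine ⟨hcR, (ENat.add_one_le_iff hn).2 (lt_of_not_ge fun hcn => ?_)⟩
      exact hc.1.not_ge (le_csSup hSbdd ⟨hcR, hcn⟩)
    rw [frequently_nhdsWithin_iff]
    exact (h1.frequently.filter_mono nhdsWithin_le_nhds).mono fun c hc => ⟨hc.2, hc.1⟩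
  refine ⟨c₀, hc₀, le_antisymm hle ?_, fun A L hL => ?_⟩
  · obtain ⟨X, hX⟩ := h.tail_le_one c₀
    obtain ⟨c, hc1, hc2⟩ := (hfreq'.and_eventually (h.count_le hc₀ hX)).exists
    exact (ENat.add_le_add_iff_right (by simp)).1 (hc1.trans hc2)
  · by_contra hA
    obtain ⟨X, hX⟩ := h.tail_eq_zero c₀ hA hL
    obtain ⟨c, hc1, hc2⟩ := (hfreq'.and_eventually (h.count_le hc₀ hX)).exists
    rw [add_zero] at hc2
    exact ((ENat.add_one_le_iff hn).1 (hc1.trans (hc2.trans hle))).false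

end IsFamily

/-- For every natural number `n` there exist `c > 0` and a function `f`, C² on `[0,∞)`,
with `f 0 = 0`, `f' 0 = c`, solving `f'' + f³ / sinh² x = 0` on `(0,∞)`, having exactly
`n` zeros in `(0,∞)`, with `f' → 0` at infinity and `f` tending to a finite nonzero limit. -/
theorem cubic_wave_selfsimilar_existence (n : ℕ) :
    ∃ c : ℝ, 0 < c ∧ ∃ f : ℝ → ℝ,
      ContDiffOn ℝ 2 f (Set.Ici 0) ∧
      f 0 = 0 ∧
      derivWithin f (Set.Ici 0) 0 = c ∧
      (∀ x : ℝ, 0 < x →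
        deriv (deriv f) x + (f x) ^ 3 / (Real.sinh x) ^ 2 = 0) ∧
      {x : ℝ | 0 < x ∧ f x = 0}.encard = n ∧
      Filter.Tendsto (deriv f) Filter.atTop (nhds 0) ∧
      ∃ L : ℝ, L ≠ 0 ∧ Filter.Tendsto f Filter.atTop (nhds L) := by
  have hK : 1 ≤ zeroRatio := by have := turnRatio_gt; unfold zeroRatio; linarith
  have hR1 : 1 ≤ zeroRatio ^ (n + 1) := one_le_pow₀ hK
  obtain ⟨F, P, C, hC, hprof, hP, hF⟩ := exists_family (R := zeroRatio ^ (n + 1)) (by linarith)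
  have hfam : IsFamily (zeroRatio ^ (n + 1)) F P C := ⟨hprof, hP, hF, hC⟩
  obtain ⟨c, hc, hcard, hlin⟩ := hfam.exists_critical n (c₁ := 1 / 100)
    ⟨by norm_num, by linarith⟩
    (by
      have := (hprof (1 / 100) ⟨by norm_num, by linarith⟩).no_zeros (by norm_num) (by norm_num)
      rw [zeroSet, this]; simp)
    (by simpa [zeroSet] using (hprof _ ⟨by linarith, le_rfl⟩).many_zeros (n + 1))
  have h := hprof c ⟨hc.1.le, hc.2⟩
  obtain ⟨A, L, hA, hA', hL⟩ := h.asymptotics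
  obtain rfl := hlin A L hL
  simp only [zero_mul, sub_zero] at hL hA'
  have hd : deriv (F c) = P c := funext fun x => (h.hasDeriv_f x).deriv
  refine ⟨c, hc.1, F c, h.contDiff.contDiffOn, h.f_zero, ?_, fun x hx => ?_, hcard, ?_, L,
    h.lim_ne_zero hc.1 hA' hL, hL⟩
  · rw [((h.hasDeriv_f 0).hasDerivWithinAt).derivWithin (uniqueDiffOn_Ici 0 0 self_mem_Ici),
      h.p_zero]
  · rw [hd, (h.hasDeriv_p x hx).deriv]; ring
  · rw [hd]; exact hA
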